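/- If λ_1 and λ_2 are Dyck paths of order n whose chord posets P_{λ_1} and P_{λ_2} are isomorphic as posets, then the generating functions of their cover-inclusive Dyck tilings by the art statistic coincide: Σ_{T ∈ D(λ_1,*)} q^{art(T)} = Σ_{T ∈ D(λ_2,*)} q^{art(T)}. -/

import Mathlib

open Finset

noncomputable section

/-- A Dyck path of order `n`: a word of `2n` steps (`true` = up-step `(+1,+1)`,
`false` = down-step `(+1,-1)`) from `(-n,0)` to `(n,0)` staying weakly above the x-axis. -/
structure DyckPath (n : ℕ) where
  step : Fin (2 * n) → Bool
  balanced : (Finset.univ.filter fun i => step i = true).card = n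
  nonneg : ∀ k : ℕ, k ≤ 2 * n →
    (Finset.univ.filter fun i : Fin (2 * n) => (i : ℕ) < k ∧ step i = false).card ≤
      (Finset.univ.filter fun i : Fin (2 * n) => (i : ℕ) < k ∧ step i = true).card

namespace DyckPath

/-- Height of the path above column `x` (columns run from `-n` to `n`). -/
def ht {n : ℕ} (P : DyckPath n) (x : ℤ) : ℤ :=
  ((Finset.univ.filter fun i : Fin (2 * n) => ((i : ℕ) : ℤ) < x + n ∧ P.step i = true).card : ℤ) -
    ((Finset.univ.filter fun i : Fin (2 * n) => ((i : ℕ) : ℤ) < x + n ∧ P.step i = false).card : ℤ)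

/-- Height of the path at lattice point number `k`, `0 ≤ k ≤ 2n`
(point `k` lies at column `k - n`). -/
def pt {n : ℕ} (P : DyckPath n) (k : ℕ) : ℤ := P.ht ((k : ℤ) - n)

end DyckPath

/-- `IsChord P p q`: the up-step at (0-indexed) position `p` matches the down-step at
position `q`, forming a chord of `P`. -/
def IsChord {n : ℕ} (P : DyckPath n) (p q : ℕ) : Prop :=
  p < q ∧ q < 2 * n ∧
    (∃ hp : p < 2 * n, P.step ⟨p, hp⟩ = true) ∧
    (∃ hq : q < 2 * n, P.step ⟨q, hq⟩ = false) ∧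
    P.pt (q + 1) = P.pt p ∧
    ∀ m : ℕ, p < m → m ≤ q → P.pt p < P.pt m

/-- A natural labeling of the chord poset of `P`: the chord labeled `i` has its up-step at
(0-indexed) position `l i` and matching down-step at position `r i`; distinct labels name
distinct chords; and if one chord is nested inside another it receives a larger label. -/
structure ChordLabeling {n : ℕ} (P : DyckPath n) where
  l : Fin n → ℕ
  r : Fin n → ℕ
  chord : ∀ i, IsChord P (l i) (r i)
  inj : Function.Injective l
  natural : ∀ i j : Fin n, l j < l i → r i < r j → j < i

/-- The length of the chord labeled `i`: the number of up steps of `P` between and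
including its two endpoints. -/
def chordLen {n : ℕ} {P : DyckPath n} (C : ChordLabeling P) (i : Fin n) : ℕ :=
  (Finset.univ.filter fun m : Fin (2 * n) =>
    C.l i ≤ (m : ℕ) ∧ (m : ℕ) ≤ C.r i ∧ P.step m = true).card

/-- The growth sequence `p_1, …, p_n` associated with a natural chord labeling:
`p i = #{j<i : l j < l i} + #{j<i : r j < l i}`. -/
def seqOf {n : ℕ} {P : DyckPath n} (C : ChordLabeling P) (i : Fin n) : ℕ :=
  (Finset.univ.filter fun j : Fin n => j < i ∧ C.l j < C.l i).card +
    (Finset.univ.filter fun j : Fin n => j < i ∧ C.r j < C.l i).card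

/-- `σ` is the standardization of the word `w` (with distinct letters). -/
def IsStandardization {n : ℕ} (w : Fin n → ℕ) (σ : Equiv.Perm (Fin n)) : Prop :=
  ∀ i j : Fin n, σ i < σ j ↔ w i < w j

/-- `σ ∈ 𝓛(P_λ)`: σ is `L₀ ∘ L⁻¹` for some natural labeling `L` of the chord poset,
equivalently the standardization of the word of left endpoints of a natural labeling. -/
def LinExt {n : ℕ} (P : DyckPath n) (σ : Equiv.Perm (Fin n)) : Prop :=
  ∃ C : ChordLabeling P, IsStandardization C.l σ

/-- Successor index in `Fin n` (used only under the guard `i+1 < n`). -/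
def nextIdx {n : ℕ} (i : Fin n) : Fin n := ⟨((i : ℕ) + 1) % n, Nat.mod_lt _ i.pos⟩

/-- Descent set of a word: positions `i` with `i+1 < n` and `w i > w (i+1)`. -/
def descentFinset {n : ℕ} (w : Fin n → ℕ) : Finset (Fin n) :=
  Finset.univ.filter fun i => (i : ℕ) + 1 < n ∧ w (nextIdx i) < w i

/-- Number of inversions of a word. -/
def wordInv {n : ℕ} (w : Fin n → ℕ) : ℕ :=
  (Finset.univ.filter fun p : Fin n × Fin n => p.1 < p.2 ∧ w p.2 < w p.1).card

/-- The word of values of a permutation. -/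
def permWord {n : ℕ} (σ : Equiv.Perm (Fin n)) : Fin n → ℕ := fun i => (σ i : ℕ)

/-- inv(σ). -/
def permInv {n : ℕ} (σ : Equiv.Perm (Fin n)) : ℕ := wordInv (permWord σ)

/-- des(σ). -/
def permDes {n : ℕ} (σ : Equiv.Perm (Fin n)) : ℕ := (descentFinset (permWord σ)).card

/-- `REM_i(w) = {k > i : w i > w k > w (i+1)}`, the right embraced numbers. -/
def remSet {n : ℕ} (w : Fin n → ℕ) (i : Fin n) : Finset (Fin n) :=
  Finset.univ.filter fun k => i < k ∧ w (nextIdx i) < w k ∧ w k < w i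

/-- desdif(σ) = Σ_{i ∈ DES σ} (σ i − σ (i+1)). -/
def desdif {n : ℕ} (σ : Equiv.Perm (Fin n)) : ℕ :=
  ∑ i ∈ descentFinset (permWord σ), (permWord σ i - permWord σ (nextIdx i))

/-- res(σ) = Σ_{i ∈ DES σ} #{k < i : σ i > σ k > σ (i+1)}. -/
def resStat {n : ℕ} (σ : Equiv.Perm (Fin n)) : ℕ :=
  ∑ i ∈ descentFinset (permWord σ),
    (Finset.univ.filter fun k : Fin n =>
      k < i ∧ permWord σ (nextIdx i) < permWord σ k ∧ permWord σ k < permWord σ i).card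

/-- The Mahonian statistic mad(σ) = desdif(σ) + res(σ). -/
def mad {n : ℕ} (σ : Equiv.Perm (Fin n)) : ℕ := desdif σ + resStat σ

/-- σ avoids the pattern 231. -/
def Avoids231 {n : ℕ} (σ : Equiv.Perm (Fin n)) : Prop :=
  ¬∃ i j k : Fin n, i < j ∧ j < k ∧ σ k < σ i ∧ σ i < σ j

/-- The boxes of the skew shape `lam/mu` (with `mu` weakly above `lam`), each box
recorded by its bottom corner (a lattice point `(x, z)` with `z ≡ x + n (mod 2)`). -/
def skewCells {n : ℕ} (lam mu : DyckPath n) : Finset (ℤ × ℤ) :=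
  ((Finset.Icc (-(n : ℤ)) n) ×ˢ (Finset.Icc (0 : ℤ) n)).filter fun c =>
    lam.ht c.1 ≤ c.2 ∧ c.2 + 2 ≤ mu.ht c.1 ∧ (c.2 - c.1 - n) % 2 = 0

/-- A Dyck tile, recorded by the set of bottom corners of its boxes: these form
a Dyck-path shape, i.e. a ±1-step lattice path whose two ends are lowest. -/
def IsDyckTile (t : Finset (ℤ × ℤ)) : Prop :=
  ∃ (a b : ℤ) (f : ℤ → ℤ), a ≤ b ∧
    (∀ x : ℤ, a ≤ x → x < b → f (x + 1) = f x + 1 ∨ f (x + 1) = f x - 1) ∧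
    f b = f a ∧ (∀ x : ℤ, a ≤ x → x ≤ b → f a ≤ f x) ∧
    t = (Finset.Icc a b).image fun x => (x, f x)

/-- A Dyck tiling of order `n`: a tiling of the skew shape between two Dyck paths of
order `n` by Dyck tiles. -/
structure DyckTiling (n : ℕ) where
  lower : DyckPath n
  upper : DyckPath n
  below : ∀ x : ℤ, lower.ht x ≤ upper.ht x
  tiles : Finset (Finset (ℤ × ℤ))
  isDyck : ∀ t ∈ tiles, IsDyckTile t
  disj : ∀ t ∈ tiles, ∀ u ∈ tiles, t ≠ u → Disjoint t u
  cover : tiles.biUnion id = skewCells lower upper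

namespace DyckTiling

/-- Number of boxes of the skew shape. -/
def area {n : ℕ} (T : DyckTiling n) : ℕ := (skewCells T.lower T.upper).card

/-- Number of tiles. -/
def numTiles {n : ℕ} (T : DyckTiling n) : ℕ := T.tiles.card

/-- art(T) = (area(T) + tiles(T)) / 2. -/
def art {n : ℕ} (T : DyckTiling n) : ℕ := (T.area + T.numTiles) / 2

/-- dis(T): the number of step positions where the lower path steps down while the
upper path steps up. -/
def dis {n : ℕ} (T : DyckTiling n) : ℕ :=
  (Finset.univ.filter fun i : Fin (2 * n) =>
    T.lower.step i = false ∧ T.upper.step i = true).card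

/-- Cover-inclusiveness: whenever a tile has a box strictly above a box of another tile,
its horizontal extent is contained in that of the other tile. -/
def CoverInclusive {n : ℕ} (T : DyckTiling n) : Prop :=
  ∀ t ∈ T.tiles, ∀ u ∈ T.tiles,
    (∃ p ∈ t, ∃ q ∈ u, (p : ℤ × ℤ).1 = (q : ℤ × ℤ).1 ∧ (q : ℤ × ℤ).2 < (p : ℤ × ℤ).2) →
    ∀ p ∈ t, ∃ y : ℤ, ((p : ℤ × ℤ).1, y) ∈ u

end DyckTiling

/-- Height function of the spread at column `s` of a Dyck path. -/
def spreadHt {n : ℕ} (P : DyckPath n) (s x : ℤ) : ℤ :=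
  if x < s then P.ht (x + 1) else if x = s then P.ht s + 1 else P.ht (x - 1)

/-- Spread of a tile at column `s`: points left of `s` move left, points right of `s`
move right, and a point at column `s` is duplicated upward. -/
def spreadTile (s : ℤ) (t : Finset (ℤ × ℤ)) : Finset (ℤ × ℤ) :=
  ((t.filter fun p => p.1 ≤ s).image fun p => (p.1 - 1, p.2)) ∪
    ((t.filter fun p => p.1 = s).image fun p => (p.1, p.2 + 1)) ∪
    ((t.filter fun p => s ≤ p.1).image fun p => (p.1 + 1, p.2))

/-- Spread of a set of tiles at column `s`. -/
def spreadTiles (s : ℤ) (ts : Finset (Finset (ℤ × ℤ))) : Finset (Finset (ℤ × ℤ)) :=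
  ts.image (spreadTile s)

/-- Column `c` is eligible for a tiling with upper-boundary height function `h` and
tile set `ts`: the upper boundary has an up step ending at column `c`, and its point at
column `c` is not the top corner of a one-box tile. -/
def EligibleCol (h : ℤ → ℤ) (ts : Finset (Finset (ℤ × ℤ))) (c : ℤ) : Prop :=
  h c = h (c - 1) + 1 ∧ ({(c, h c - 2)} : Finset (ℤ × ℤ)) ∉ ts

/-- `T'` is the result of the strip-grow map applied to `(T, s)`: spread `T` at `s` and
add a one-box tile on each up step of the (spread) upper boundary starting at a column
`≥ s` (i.e. strictly to the right of column `s`). -/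
def StripGrowRel {n : ℕ} (T : DyckTiling n) (s : ℤ) (T' : DyckTiling (n + 1)) : Prop :=
  (∀ x : ℤ, T'.lower.ht x = spreadHt T.lower s x) ∧
  (∀ x : ℤ, T'.upper.ht x =
    if s ≤ x ∧ spreadHt T.upper s (x + 1) = spreadHt T.upper s x + 1 then
      spreadHt T.upper s x + 2
    else spreadHt T.upper s x) ∧
  T'.tiles = spreadTiles s T.tiles ∪
    ((Finset.Icc s (n : ℤ)).filter fun x =>
        spreadHt T.upper s (x + 1) = spreadHt T.upper s x + 1).image
      (fun x => ({(x, spreadHt T.upper s x)} : Finset (ℤ × ℤ)))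

/-- `T'` is the result of the ribbon-grow map applied to `(T, s)`: spread `T` at `s`,
and if the special column `Q` of the spread tiling is strictly right of `s`, add a
ribbon of one-box tiles at all columns strictly between `s` and `Q`. -/
def RibbonGrowRel {n : ℕ} (T : DyckTiling n) (s : ℤ) (T' : DyckTiling (n + 1)) : Prop :=
  (∀ x : ℤ, T'.lower.ht x = spreadHt T.lower s x) ∧
  ∃ Q : ℤ,
    EligibleCol (spreadHt T.upper s) (spreadTiles s T.tiles) Q ∧
    (∀ c : ℤ, EligibleCol (spreadHt T.upper s) (spreadTiles s T.tiles) c → c ≤ Q) ∧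
    (∀ x : ℤ, T'.upper.ht x =
      if s < x ∧ x < Q then spreadHt T.upper s x + 2 else spreadHt T.upper s x) ∧
    T'.tiles = spreadTiles s T.tiles ∪
      (Finset.Ioo s Q).image (fun x => ({(x, spreadHt T.upper s x)} : Finset (ℤ × ℤ)))

/-- `s` is the special column of `T`: its rightmost eligible column. -/
def SpecialCol {n : ℕ} (T : DyckTiling n) (s : ℤ) : Prop :=
  EligibleCol T.upper.ht T.tiles s ∧ ∀ c : ℤ, EligibleCol T.upper.ht T.tiles c → c ≤ s

/-- In the strip-shrink map applied to `T'` with special column `s`, a one-box tile is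
removed at column `x`: `x` is right of `s` and there is a one-box tile there that is
part of an up step of the upper boundary. -/
def StripRemovedAt {n : ℕ} (T' : DyckTiling n) (s x : ℤ) : Prop :=
  s < x ∧ T'.upper.ht x = T'.upper.ht (x - 1) + 1 ∧
    ({(x, T'.upper.ht x - 2)} : Finset (ℤ × ℤ)) ∈ T'.tiles

instance {n : ℕ} (T' : DyckTiling n) (s x : ℤ) : Decidable (StripRemovedAt T' s x) := by
  unfold StripRemovedAt; infer_instance

/-- `(T, s)` is the result of the strip-shrink map applied to `T'`: `s` is the special
column of `T'`; all one-box tiles right of `s` lying on up steps of the upper boundary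
are removed; and the result is the spread of `T` at `s`. -/
def StripShrinkRel {n : ℕ} (T' : DyckTiling (n + 1)) (T : DyckTiling n) (s : ℤ) : Prop :=
  SpecialCol T' s ∧
  (∀ x : ℤ, spreadHt T.lower s x = T'.lower.ht x) ∧
  (∀ x : ℤ, spreadHt T.upper s x =
    if StripRemovedAt T' s x then T'.upper.ht x - 2 else T'.upper.ht x) ∧
  spreadTiles s T.tiles =
    T'.tiles \ (((Finset.Ioc s ((n : ℤ) + 1)).filter fun x => StripRemovedAt T' s x).image
      fun x => ({(x, T'.upper.ht x - 2)} : Finset (ℤ × ℤ)))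

/-- `(T, s)` is the result of the ribbon-shrink map applied to `T'`: `s` is the special
column of `T'`; the maximal run of topmost one-box tiles in columns `s+1, s+2, …` is
removed; and the result is the spread of `T` at `s`. -/
def RibbonShrinkRel {n : ℕ} (T' : DyckTiling (n + 1)) (T : DyckTiling n) (s : ℤ) : Prop :=
  SpecialCol T' s ∧
  ∃ r : ℤ, s < r ∧
    (∀ x : ℤ, s < x → x < r → ({(x, T'.upper.ht x - 2)} : Finset (ℤ × ℤ)) ∈ T'.tiles) ∧
    ({(r, T'.upper.ht r - 2)} : Finset (ℤ × ℤ)) ∉ T'.tiles ∧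
    (∀ x : ℤ, spreadHt T.lower s x = T'.lower.ht x) ∧
    (∀ x : ℤ, spreadHt T.upper s x =
      if s < x ∧ x < r then T'.upper.ht x - 2 else T'.upper.ht x) ∧
    spreadTiles s T.tiles =
      T'.tiles \ ((Finset.Ioo s r).image fun x => ({(x, T'.upper.ht x - 2)} : Finset (ℤ × ℤ)))

/-- `IsDTS n p T`: `T` is the Dyck tiling `DTS(p_1, …, p_n)` (indices 0-based, so the
growth column for step `i` is `p i - i`). -/
inductive IsDTS : (n : ℕ) → (Fin n → ℕ) → DyckTiling n → Prop where
  | nil (p : Fin 0 → ℕ) (T : DyckTiling 0) : IsDTS 0 p T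
  | cons (n : ℕ) (p : Fin (n + 1) → ℕ) (T : DyckTiling n) (T' : DyckTiling (n + 1)) :
      IsDTS n (fun i => p i.castSucc) T →
      StripGrowRel T ((p (Fin.last n) : ℤ) - n) T' → IsDTS (n + 1) p T'

/-- `IsDTR n p T`: `T` is the Dyck tiling `DTR(p_1, …, p_n)`. -/
inductive IsDTR : (n : ℕ) → (Fin n → ℕ) → DyckTiling n → Prop where
  | nil (p : Fin 0 → ℕ) (T : DyckTiling 0) : IsDTR 0 p T
  | cons (n : ℕ) (p : Fin (n + 1) → ℕ) (T : DyckTiling n) (T' : DyckTiling (n + 1)) :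
      IsDTR n (fun i => p i.castSucc) T →
      RibbonGrowRel T ((p (Fin.last n) : ℤ) - n) T' → IsDTR (n + 1) p T'

/-- `T = DTS(λ, σ)`. -/
def IsDTSof {n : ℕ} (lam : DyckPath n) (σ : Equiv.Perm (Fin n)) (T : DyckTiling n) : Prop :=
  ∃ C : ChordLabeling lam, IsStandardization C.l σ ∧ IsDTS n (seqOf C) T

/-- `T = DTR(λ, σ)`. -/
def IsDTRof {n : ℕ} (lam : DyckPath n) (σ : Equiv.Perm (Fin n)) (T : DyckTiling n) : Prop :=
  ∃ C : ChordLabeling lam, IsStandardization C.l σ ∧ IsDTR n (seqOf C) T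

/-- Increment `a` if it exceeds `p`. -/
def bump (p a : ℕ) : ℕ := if p < a then a + 1 else a

/-- The perfect matching `match(p_1, …, p_n)` of `{1, …, 2n}`. -/
def matchSeq : (n : ℕ) → (Fin n → ℕ) → Finset (ℕ × ℕ)
  | 0, _ => ∅
  | n + 1, p =>
    ((matchSeq n fun i => p i.castSucc).image fun q =>
      (bump (p (Fin.last n)) q.1, bump (p (Fin.last n)) q.2)) ∪
      {(p (Fin.last n) + 1, 2 * (n + 1))}

/-- The number of nestings of a matching: pairs `(a,b)`, `(c,d)` with `c < a < b < d`. -/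
def nestings (M : Finset (ℕ × ℕ)) : ℕ :=
  ((M ×ˢ M).filter fun q => q.2.1 < q.1.1 ∧ q.1.1 < q.1.2 ∧ q.1.2 < q.2.2).card

/-- `w` is the min-word of `M`: the list of the smaller elements of the pairs of `M`,
sorted by the larger elements. -/
def IsMinWord (n : ℕ) (M : Finset (ℕ × ℕ)) (w : Fin n → ℕ) : Prop :=
  ∃ b : Fin n → ℕ, StrictMono b ∧ (∀ i, w i < b i) ∧
    M = Finset.univ.image fun i => (w i, b i)

/-- The number of tiles of `T` containing boxes over both endpoint columns of the
chord with endpoints at step positions `p < q`. -/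
def chordTileCount {n : ℕ} (T : DyckTiling n) (p q : ℕ) : ℕ :=
  (T.tiles.filter fun t =>
    (∃ c ∈ t, (c : ℤ × ℤ).1 = (p : ℤ) + 1 - n) ∧ (∃ c ∈ t, (c : ℤ × ℤ).1 = (q : ℤ) - n)).card

/-- A Dyck tableau of order `n` over the zigzag path `Z` of order `n+1`: a skew shape
`Z/μ` with `n` dots, one in each column of the skew shape through a valley of `Z`. -/
structure DyckTableau (n : ℕ) (Z : DyckPath (n + 1)) where
  upper : DyckPath (n + 1)
  below : ∀ x : ℤ, Z.ht x ≤ upper.ht x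
  dots : Finset (ℤ × ℤ)
  sub : dots ⊆ skewCells Z upper
  card_dots : dots.card = n
  valley : ∀ x : ℤ, Z.ht (x - 1) = Z.ht x + 1 → Z.ht (x + 1) = Z.ht x + 1 →
    (dots.filter fun c => c.1 = x).card = 1

/-- The `q`-integer `[m]_q = 1 + q + ⋯ + q^(m-1)` as a polynomial. -/
def qint (m : ℕ) : Polynomial ℤ := ∑ i ∈ Finset.range m, Polynomial.X ^ i

/-- The `q`-factorial `[n]_q!`. -/
def qfact (n : ℕ) : Polynomial ℤ := ∏ i ∈ Finset.range n, qint (i + 1)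


/-! ### Operators on sequences of polynomials -/

namespace SeqOp

open Polynomial

/-- The right shift of a sequence. -/
def shiftR : Module.End ℤ[X] (ℕ → ℤ[X]) where
  toFun φ i := Nat.casesOn i 0 φ
  map_add' φ ψ := by ext1 i; cases i <;> simp
  map_smul' c φ := by ext1 i; cases i <;> simp

/-- The left shift of a sequence. -/
def shiftL : Module.End ℤ[X] (ℕ → ℤ[X]) where
  toFun φ i := φ (i + 1)
  map_add' _ _ := rfl
  map_smul' _ _ := rfl

/-- Multiplication of the `i`-th term by `q ^ i`. -/
def scale : Module.End ℤ[X] (ℕ → ℤ[X]) where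
  toFun φ i := X ^ i * φ i
  map_add' φ ψ := by ext1 i; simp [mul_add]
  map_smul' c φ := by ext1 i; simp [mul_left_comm]

/-- Multiplication of the `i`-th term by `[i + 1]_q`. -/
def qScale : Module.End ℤ[X] (ℕ → ℤ[X]) where
  toFun φ i := qint (i + 1) * φ i
  map_add' φ ψ := by ext1 i; simp [mul_add]
  map_smul' c φ := by ext1 i; simp [mul_left_comm]

/-- The creation operator. -/
def create : Module.End ℤ[X] (ℕ → ℤ[X]) := (1 + shiftR) * scale

/-- The annihilation operator. -/
def annihilate : Module.End ℤ[X] (ℕ → ℤ[X]) := (1 + shiftL) * scale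

/-- The tridiagonal operator which adds one chord. -/
def tridiag : Module.End ℤ[X] (ℕ → ℤ[X]) := (1 + shiftR) * qScale * annihilate

@[simp] lemma shiftR_zero (φ : ℕ → ℤ[X]) : shiftR φ 0 = 0 := rfl
@[simp] lemma shiftR_succ (φ : ℕ → ℤ[X]) (i : ℕ) : shiftR φ (i + 1) = φ i := rfl
@[simp] lemma shiftL_apply (φ : ℕ → ℤ[X]) (i : ℕ) : shiftL φ i = φ (i + 1) := rfl
@[simp] lemma scale_apply (φ : ℕ → ℤ[X]) (i : ℕ) : scale φ i = X ^ i * φ i := rfl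
@[simp] lemma qScale_apply (φ : ℕ → ℤ[X]) (i : ℕ) : qScale φ i = qint (i + 1) * φ i := rfl

lemma qint_succ (m : ℕ) : qint (m + 1) = qint m + X ^ m := by
  simp [qint, Finset.sum_range_succ]

@[simp] lemma qint_zero : qint 0 = 0 := by simp [qint]

lemma X_pow_eq_qint (m : ℕ) : (X : ℤ[X]) ^ m = 1 + (X - 1) * qint m := by
  induction m with
  | zero => simp
  | succ m ih => rw [qint_succ, mul_add, ← add_assoc, ← ih]; ring

lemma qint_ne_zero (m : ℕ) : qint (m + 1) ≠ 0 := by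
  intro h
  have := congrArg (Polynomial.eval 1) h
  simp [qint, Polynomial.eval_finsetSum] at this
  exact absurd this (by positivity)

lemma annihilate_apply (φ : ℕ → ℤ[X]) (i : ℕ) :
    annihilate φ i = X ^ i * φ i + X ^ (i + 1) * φ (i + 1) := by
  simp [annihilate]

lemma create_zero (φ : ℕ → ℤ[X]) : create φ 0 = φ 0 := by simp [create]

lemma create_succ (φ : ℕ → ℤ[X]) (i : ℕ) :
    create φ (i + 1) = X ^ (i + 1) * φ (i + 1) + X ^ i * φ i := by
  simp [create]

lemma tridiag_zero (φ : ℕ → ℤ[X]) : tridiag φ 0 = φ 0 + X * φ 1 := by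
  simp [tridiag, annihilate_apply, qint_succ]

lemma tridiag_succ (φ : ℕ → ℤ[X]) (i : ℕ) :
    tridiag φ (i + 1) = qint (i + 2) * (X ^ (i + 1) * φ (i + 1) + X ^ (i + 2) * φ (i + 2)) +
      qint (i + 1) * (X ^ i * φ i + X ^ (i + 1) * φ (i + 1)) := by
  simp [tridiag, annihilate_apply]

lemma shiftL_mul_tridiag :
    shiftL * tridiag = (X : ℤ[X]) • (tridiag * shiftL) + annihilate * annihilate := by
  ext1 φ
  funext i
  rcases i with - | i
  · simp [tridiag_zero, tridiag_succ, annihilate_apply, qint_succ]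
    ring
  · simp [tridiag_succ, annihilate_apply, qint_succ, pow_succ, X_pow_eq_qint i]
    ring

lemma annihilate_mul_tridiag :
    annihilate * tridiag = (X : ℤ[X]) • (tridiag * annihilate) + annihilate * annihilate := by
  ext1 φ
  funext i
  rcases i with - | i
  · simp [tridiag_zero, tridiag_succ, annihilate_apply, qint_succ]
    ring
  · simp [tridiag_succ, annihilate_apply, qint_succ, pow_succ, X_pow_eq_qint i]
    ring

lemma one_add_shiftR_mul : 1 + shiftR * (annihilate - shiftL) = create := by
  ext1 φ
  funext i
  rcases i with - | i
  · simp [create_zero]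
  · simp [create_succ, annihilate_apply]
    ring

lemma tridiag_eq :
    tridiag = (X : ℤ[X]) • (shiftR * tridiag * shiftL) + create * annihilate := by
  ext1 φ
  funext i
  rcases i with - | - | i
  · simp [tridiag_zero, create_zero, annihilate_apply]
  · simp [tridiag_zero, tridiag_succ, create_succ, annihilate_apply, qint_succ]
    ring
  · simp [tridiag_succ, create_succ, annihilate_apply, qint_succ, pow_succ, X_pow_eq_qint i]
    ring

lemma annihilate_sub_shiftL_mul_tridiag :
    (annihilate - shiftL) * tridiag = (X : ℤ[X]) • (tridiag * (annihilate - shiftL)) := by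
  rw [sub_mul, annihilate_mul_tridiag, shiftL_mul_tridiag, mul_sub, smul_sub]
  abel

lemma create_mul_tridiag_pow (m : ℕ) :
    create * tridiag ^ m =
      tridiag ^ m + (X ^ m : ℤ[X]) • (shiftR * tridiag ^ m * (annihilate - shiftL)) := by
  induction m with
  | zero => simp [one_add_shiftR_mul]
  | succ m ih =>
    rw [pow_succ, ← mul_assoc, ih, add_mul, smul_mul_assoc, mul_assoc _ _ tridiag,
      annihilate_sub_shiftL_mul_tridiag, mul_smul_comm, smul_smul]
    simp only [mul_assoc, pow_succ]

lemma tridiag_pow_succ (m : ℕ) :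
    tridiag ^ (m + 1) = (X ^ (m + 1) : ℤ[X]) • (shiftR * tridiag ^ (m + 1) * shiftL) +
      qint (m + 1) • (create * tridiag ^ m * annihilate) := by
  induction m with
  | zero => simpa [qint] using tridiag_eq
  | succ m ih =>
    have key : qint (m + 1) • (create * tridiag ^ m * annihilate) =
        create * tridiag ^ (m + 1) - (X ^ (m + 1) : ℤ[X]) •
          (shiftR * tridiag ^ (m + 1) * annihilate) := by
      rw [create_mul_tridiag_pow (m + 1), mul_sub, smul_sub, ← sub_eq_iff_eq_add'.mpr ih]
      abel
    conv_lhs => rw [pow_succ, ih]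
    rw [add_mul, smul_mul_assoc, smul_mul_assoc, mul_assoc _ shiftL, shiftL_mul_tridiag,
      mul_assoc _ annihilate, annihilate_mul_tridiag, mul_add, mul_add, smul_add, smul_add,
      ← mul_assoc _ annihilate annihilate, ← mul_assoc _ annihilate annihilate,
      ← smul_mul_assoc (qint (m + 1)) _ annihilate, key, qint_succ (m + 1)]
    have h1 : qint (m + 1) * X + 1 = qint (m + 1) + X ^ (m + 1) := by
      rw [X_pow_eq_qint]; ring
    rw [← h1]
    simp only [mul_smul_comm, smul_smul, sub_mul, smul_mul_assoc, add_smul, one_smul, pow_succ,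
      mul_assoc]
    abel

/-- The recursion `Z = q ^ k • S Z D + W` has at most one solution. -/
lemma eq_of_shift_recursion (c : ℤ[X]) (Z Z' W : (ℕ → ℤ[X]) → ℕ → ℤ[X])
    (h0 : ∀ φ, Z φ 0 = W φ 0) (h0' : ∀ φ, Z' φ 0 = W φ 0)
    (hs : ∀ φ i, Z φ (i + 1) = c * Z (shiftL φ) i + W φ (i + 1))
    (hs' : ∀ φ i, Z' φ (i + 1) = c * Z' (shiftL φ) i + W φ (i + 1)) (φ : ℕ → ℤ[X]) (i : ℕ) :
    Z φ i = Z' φ i := by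
  induction i generalizing φ with
  | zero => rw [h0, h0']
  | succ i ih => rw [hs, hs', ih]

end SeqOp

/-! ### Plane forests and their configurations -/

/-- Plane forests; `cons a r` is a tree whose root carries the forest `a`, followed by `r`. -/
inductive ChordForest where
  | nil : ChordForest
  | cons (a r : ChordForest) : ChordForest

namespace ChordForest

open Polynomial SeqOp

/-- The number of vertices. -/
def size : ChordForest → ℕ
  | nil => 0
  | cons a r => a.size + 1 + r.size

/-- The product of the `q`-hook lengths. -/
def hookProd : ChordForest → ℤ[X]
  | nil => 1
  | cons a r => qint (a.size + 1) * a.hookProd * r.hookProd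

/-- Labelings of the points and chords of a path by natural numbers. -/
inductive Cfg : ChordForest → Type where
  | point (t : ℕ) : Cfg nil
  | node {a r : ChordForest} (t k : ℕ) (ca : Cfg a) (cr : Cfg r) : Cfg (cons a r)

/-- The label of the first point. -/
def first : {f : ChordForest} → Cfg f → ℕ
  | _, .point t => t
  | _, .node t _ _ _ => t

/-- The label of the last point. -/
def last : {f : ChordForest} → Cfg f → ℕ
  | _, .point t => t
  | _, .node _ _ _ cr => last cr

/-- The compatibility conditions between the labels. -/
def Valid : {f : ChordForest} → Cfg f → Prop
  | _, .point _ => True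
  | _, .node t k ca cr =>
      (first ca + k ≤ t ∧ t ≤ first ca + k + 1) ∧
      (last ca + k ≤ first cr ∧ first cr ≤ last ca + k + 1) ∧ Valid ca ∧ Valid cr

/-- The weight of a configuration. -/
def weight : {f : ChordForest} → Cfg f → ℕ
  | _, .point t => t
  | _, .node (a := a) t k ca cr => t + k * a.size + weight ca + weight cr

@[simp] lemma first_node {a r : ChordForest} (t k : ℕ) (ca : Cfg a) (cr : Cfg r) :
    first (.node t k ca cr) = t := rfl

@[simp] lemma last_node {a r : ChordForest} (t k : ℕ) (ca : Cfg a) (cr : Cfg r) :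
    last (.node t k ca cr) = last cr := rfl

/-- The index set for the configurations of `cons a r`. -/
def cfgIndex (a r : ChordForest) (Fa : ℕ → Finset (Cfg a)) (Fr : ℕ → Finset (Cfg r)) (i : ℕ) :
    Finset (Σ _ : ℕ, Σ _ : ℕ, Σ _ : Cfg a, Σ _ : ℕ, Cfg r) :=
  (range (i + 1)).sigma fun k => (range (min 2 (i + 1 - k))).sigma fun ε =>
    (Fa (i - k - ε)).sigma fun ca => (range 2).sigma fun δ => Fr (last ca + k + δ)

open Classical in
/-- The finite set of valid configurations with given first label. -/
def cfgs : (f : ChordForest) → ℕ → Finset (Cfg f)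
  | nil, i => {.point i}
  | cons a r, i => (cfgIndex a r (cfgs a) (cfgs r) i).image
      fun s => .node i s.1 s.2.2.1 s.2.2.2.2

lemma mem_cfgs (f : ChordForest) (i : ℕ) (c : Cfg f) :
    c ∈ cfgs f i ↔ Valid c ∧ first c = i := by
  induction f generalizing i with
  | nil =>
    cases c
    simp [cfgs, Valid, first]
  | cons a r iha ihr =>
    obtain - | ⟨t, k, ca, cr⟩ := c
    simp only [cfgs, cfgIndex, mem_image, Finset.mem_sigma, Finset.mem_range, iha, ihr, Valid, first_node]
    constructor
    · rintro ⟨⟨k', ε, ca', δ, cr'⟩, ⟨h1, h2, ⟨h3, h4⟩, h5, h6, h7⟩, h8⟩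
      simp only [Cfg.node.injEq] at h8 h1 h2 h3 h4 h5 h6 h7
      obtain ⟨rfl, rfl, rfl, rfl⟩ := h8
      refine ⟨⟨?_, ?_, h3, h6⟩, rfl⟩ <;> omega
    · rintro ⟨⟨h1, h2, h3, h4⟩, rfl⟩
      refine ⟨⟨k, t - k - first ca, ca, first cr - (last ca + k), cr⟩, ?_, rfl⟩
      simp only
      refine ⟨by omega, by omega, ⟨h3, by omega⟩, by omega, h4, by omega⟩

lemma sum_cfgs_cons (a r : ChordForest) (i : ℕ) (g : Cfg (cons a r) → ℤ[X]) :
    ∑ c ∈ cfgs (cons a r) i, g c =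
      ∑ k ∈ range (i + 1), ∑ ε ∈ range (min 2 (i + 1 - k)), ∑ ca ∈ cfgs a (i - k - ε),
        ∑ δ ∈ range 2, ∑ cr ∈ cfgs r (last ca + k + δ), g (.node i k ca cr) := by
  classical
  rw [cfgs, Finset.sum_image]
  · simp only [cfgIndex, Finset.sum_sigma]
  · rintro ⟨k, ε, ca, δ, cr⟩ h ⟨k', ε', ca', δ', cr'⟩ h' heq
    simp only [cfgIndex, coe_sigma, Set.mem_sigma_iff, Finset.mem_coe, Finset.mem_range,
      mem_cfgs] at h h'
    simp only [Cfg.node.injEq] at heq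
    obtain ⟨-, rfl, rfl, rfl⟩ := heq
    obtain rfl : ε = ε' := by omega
    obtain rfl : δ = δ' := by omega
    rfl

/-- The generating function of configurations, as an operator. -/
def transfer (f : ChordForest) (φ : ℕ → ℤ[X]) (i : ℕ) : ℤ[X] :=
  ∑ c ∈ cfgs f i, X ^ weight c * φ (last c)

/-- The contribution of a chord carrying the forest `a`. -/
def chordTransfer (a : ChordForest) (φ : ℕ → ℤ[X]) (i : ℕ) : ℤ[X] :=
  ∑ k ∈ range (i + 1), ∑ ε ∈ range (min 2 (i + 1 - k)),
    X ^ (k * a.size) * transfer a (fun j => φ (j + k) + φ (j + k + 1)) (i - k - ε)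

lemma transfer_nil (φ : ℕ → ℤ[X]) (i : ℕ) : transfer nil φ i = X ^ i * φ i := by
  simp [transfer, cfgs, weight, last]

lemma transfer_cons (a r : ChordForest) (φ : ℕ → ℤ[X]) (i : ℕ) :
    transfer (cons a r) φ i = X ^ i * chordTransfer a (transfer r φ) i := by
  rw [transfer, sum_cfgs_cons, chordTransfer, Finset.mul_sum]
  refine Finset.sum_congr rfl fun k _ => ?_
  rw [Finset.mul_sum]
  refine Finset.sum_congr rfl fun ε _ => ?_
  rw [transfer, Finset.mul_sum, Finset.mul_sum]
  refine Finset.sum_congr rfl fun ca _ => ?_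
  simp only [Finset.sum_range_succ, Finset.sum_range_zero, zero_add, add_zero, transfer, weight,
    last_node, mul_add, Finset.mul_sum]
  congr 1 <;> (refine Finset.sum_congr rfl fun cr _ => ?_; ring)

lemma chordTransfer_zero (a : ChordForest) (φ : ℕ → ℤ[X]) :
    chordTransfer a φ 0 = transfer a (φ + shiftL φ) 0 := by
  simp [chordTransfer]
  rfl

lemma chordTransfer_succ (a : ChordForest) (φ : ℕ → ℤ[X]) (i : ℕ) :
    chordTransfer a φ (i + 1) = X ^ a.size * chordTransfer a (shiftL φ) i +
      (transfer a (φ + shiftL φ) (i + 1) + transfer a (φ + shiftL φ) i) := by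
  rw [chordTransfer, Finset.sum_range_succ']
  congr 1
  · rw [chordTransfer, Finset.mul_sum]
    refine Finset.sum_congr rfl fun k _ => ?_
    rw [Finset.mul_sum, show i + 1 + 1 - (k + 1) = i + 1 - k by omega]
    refine Finset.sum_congr rfl fun ε _ => ?_
    rw [show i + 1 - (k + 1) - ε = i - k - ε by omega, ← mul_assoc, ← pow_add]
    congr 2
    ring
  · rw [show min 2 (i + 1 + 1 - 0) = 2 by omega]
    simp [Finset.sum_range_succ]
    rfl

/-- Up to the hook product, the generating function depends only on the size. -/
theorem hookProd_mul_transfer (f : ChordForest) (φ : ℕ → ℤ[X]) (i : ℕ) :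
    f.hookProd * transfer f φ i = X ^ i * (tridiag ^ f.size) φ i := by
  induction f generalizing φ i with
  | nil => simp [hookProd, size, transfer_nil]
  | cons a r iha ihr =>
    have hchord : ∀ φ i, qint (a.size + 1) * a.hookProd * chordTransfer a (scale φ) i =
        (tridiag ^ (a.size + 1)) φ i := by
      refine eq_of_shift_recursion (X ^ (a.size + 1))
        (fun φ i => qint (a.size + 1) * a.hookProd * chordTransfer a (scale φ) i)
        (fun φ i => (tridiag ^ (a.size + 1)) φ i)
        (fun φ i => qint (a.size + 1) * (create * tridiag ^ a.size * annihilate) φ i) ?_ ?_ ?_ ?_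
      · intro φ
        have := iha (annihilate φ) 0
        simp only [Module.End.mul_apply, create_zero, chordTransfer_zero]
        rw [pow_zero, one_mul] at this
        rw [← this, mul_assoc]
        rfl
      · intro φ
        rw [tridiag_pow_succ]
        simp
      · intro φ i
        have h1 := iha (annihilate φ) i
        have h2 := iha (annihilate φ) (i + 1)
        simp only [Module.End.mul_apply, create_succ, chordTransfer_succ]
        rw [← h1, ← h2]
        have h3 : shiftL (scale φ) = (X : ℤ[X]) • scale (shiftL φ) := by
          funext j
          simp [pow_succ]
          ring
        have h4 : ∀ ψ, chordTransfer a ((X : ℤ[X]) • ψ) i = X * chordTransfer a ψ i := by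
          intro ψ
          simp only [chordTransfer, transfer, Finset.mul_sum, Pi.smul_apply, smul_eq_mul]
          refine Finset.sum_congr rfl fun k _ => Finset.sum_congr rfl fun ε _ =>
            Finset.sum_congr rfl fun c _ => ?_
          ring
        rw [show scale φ + shiftL (scale φ) = annihilate φ from rfl, h3, h4]
        ring
      · intro φ i
        conv_lhs => rw [tridiag_pow_succ]
        simp
    have hr : (r.hookProd • transfer r φ) = scale ((tridiag ^ r.size) φ) := by
      funext j
      simpa using ihr φ j
    have hsmul : chordTransfer a (r.hookProd • transfer r φ) i =
        r.hookProd * chordTransfer a (transfer r φ) i := by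
      simp only [chordTransfer, transfer, Finset.mul_sum, Pi.smul_apply, smul_eq_mul]
      refine Finset.sum_congr rfl fun k _ => Finset.sum_congr rfl fun ε _ =>
        Finset.sum_congr rfl fun c _ => ?_
      simp only [Finset.mul_sum, mul_add]
      congr 1 <;> exact Finset.sum_congr rfl fun c _ => by ring
    rw [transfer_cons, hookProd, size, pow_add, Module.End.mul_apply, ← hchord, ← hr, hsmul]
    ring

lemma hookProd_ne_zero (f : ChordForest) : f.hookProd ≠ 0 := by
  induction f with
  | nil => exact one_ne_zero
  | cons a r iha ihr => exact mul_ne_zero (mul_ne_zero (qint_ne_zero _) iha) ihr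

end ChordForest

namespace ChordForest

/-! ### The chords of a forest, placed on the line -/

/-- The chords of the forest when its word starts at column `o`; a step is recorded by the
column in which it starts. -/
def chords : ChordForest → ℤ → List (ℤ × ℤ)
  | nil, _ => []
  | cons a r, o =>
      (o, o + 2 * a.size + 1) :: (chords a (o + 1) ++ chords r (o + 2 * a.size + 2))

/-- The function `h` follows the steps of the word of the forest, starting at column `o`. -/
def Follows (h : ℤ → ℤ) : ChordForest → ℤ → Prop
  | nil, _ => True
  | cons a r, o => h (o + 1) = h o + 1 ∧ Follows h a (o + 1) ∧
      h (o + 2 * a.size + 2) = h (o + 2 * a.size + 1) - 1 ∧ Follows h r (o + 2 * a.size + 2)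

lemma length_chords (f : ChordForest) (o : ℤ) : (f.chords o).length = f.size := by
  induction f generalizing o with
  | nil => rfl
  | cons a r iha ihr => simp [chords, size, iha, ihr]; omega

lemma chords_range {f : ChordForest} {o p q : ℤ} (hc : (p, q) ∈ f.chords o) :
    o ≤ p ∧ p < q ∧ q < o + 2 * f.size := by
  induction f generalizing o with
  | nil => simp [chords] at hc
  | cons a r iha ihr =>
    simp only [chords, List.mem_cons, List.mem_append, Prod.mk.injEq] at hc
    simp only [size, Nat.cast_add, Nat.cast_one]
    rcases hc with ⟨rfl, rfl⟩ | hc | hc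
    · omega
    · have := iha hc; omega
    · have := ihr hc; omega

lemma nodup_chords (f : ChordForest) (o : ℤ) : (f.chords o).Nodup := by
  induction f generalizing o with
  | nil => simp [chords]
  | cons a r iha ihr =>
    simp only [chords, List.nodup_cons, List.mem_append, not_or, List.nodup_append, iha, ihr,
      true_and]
    refine ⟨⟨fun h => ?_, fun h => ?_⟩, ?_⟩
    · have := chords_range h; omega
    · have := chords_range h; omega
    · rintro ⟨p, q⟩ h1 ⟨p', q'⟩ h2 heq
      have := chords_range h1
      have := chords_range h2
      simp only [Prod.mk.injEq] at heq
      omega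

lemma exists_chord {f : ChordForest} {o m : ℤ} (h1 : o ≤ m) (h2 : m < o + 2 * f.size) :
    ∃ p q, (p, q) ∈ f.chords o ∧ (m = p ∨ m = q) := by
  induction f generalizing o with
  | nil => simp [size] at h2; omega
  | cons a r iha ihr =>
    simp only [size, Nat.cast_add, Nat.cast_one] at h2
    simp only [chords, List.mem_cons, List.mem_append, Prod.mk.injEq]
    by_cases e1 : m = o ∨ m = o + 2 * a.size + 1
    · exact ⟨_, _, Or.inl ⟨rfl, rfl⟩, e1⟩
    · by_cases e2 : m ≤ o + 2 * a.size
      · obtain ⟨p, q, h, h'⟩ := iha (o := o + 1) (by omega) (by omega)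
        exact ⟨p, q, Or.inr (Or.inl h), h'⟩
      · obtain ⟨p, q, h, h'⟩ := ihr (o := o + 2 * a.size + 2) (by omega) (by omega)
        exact ⟨p, q, Or.inr (Or.inr h), h'⟩

lemma Follows.apply_end {h : ℤ → ℤ} {f : ChordForest} {o : ℤ} (H : Follows h f o) :
    h (o + 2 * f.size) = h o := by
  induction f generalizing o with
  | nil => simp [size]
  | cons a r iha ihr =>
    obtain ⟨h1, h2, h3, h4⟩ := H
    have e1 := iha h2
    have e2 := ihr h4
    simp only [size, Nat.cast_add, Nat.cast_one]
    rw [show o + 2 * ((a.size : ℤ) + 1 + r.size) = o + 2 * a.size + 2 + 2 * r.size by ring, e2, h3,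
      show o + 2 * (a.size : ℤ) + 1 = o + 1 + 2 * a.size by ring, e1, h1]
    ring

lemma Follows.le_apply {h : ℤ → ℤ} {f : ChordForest} {o : ℤ} (H : Follows h f o) {m : ℤ}
    (hm : o ≤ m) (hm' : m ≤ o + 2 * f.size) : h o ≤ h m := by
  induction f generalizing o with
  | nil =>
    obtain rfl : m = o := by simp [size] at hm'; omega
    exact le_rfl
  | cons a r iha ihr =>
    obtain ⟨h1, h2, h3, h4⟩ := H
    have e1 := h2.apply_end
    rw [show o + 1 + 2 * (a.size : ℤ) = o + 2 * a.size + 1 by ring] at e1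
    simp only [size, Nat.cast_add, Nat.cast_one] at hm'
    rcases eq_or_lt_of_le hm with rfl | hm
    · exact le_rfl
    · by_cases e2 : m ≤ o + 2 * a.size + 1
      · have := iha h2 (by omega) (by omega); omega
      · have := ihr h4 (by omega) (by omega); omega

lemma Follows.chord {h : ℤ → ℤ} {f : ChordForest} {o : ℤ} (H : Follows h f o) {p q : ℤ}
    (hc : (p, q) ∈ f.chords o) :
    h (p + 1) = h p + 1 ∧ h (q + 1) = h q - 1 ∧ h (q + 1) = h p ∧
      ∀ m, p < m → m ≤ q → h p < h m := by
  induction f generalizing o with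
  | nil => simp [chords] at hc
  | cons a r iha ihr =>
    obtain ⟨h1, h2, h3, h4⟩ := H
    simp only [chords, List.mem_cons, List.mem_append, Prod.mk.injEq] at hc
    rcases hc with ⟨rfl, rfl⟩ | hc | hc
    · have e1 := h2.apply_end
      rw [show p + 1 + 2 * (a.size : ℤ) = p + 2 * a.size + 1 by ring] at e1
      rw [show p + 2 * (a.size : ℤ) + 1 + 1 = p + 2 * a.size + 2 by ring]
      refine ⟨h1, h3, by omega, fun m hm hm' => ?_⟩
      have := h2.le_apply (m := m) (by omega) (by omega)
      omega
    · exact iha h2 hc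
    · exact ihr h4 hc

/-- A sequence with unit steps which stays weakly above its common end value follows a forest. -/
lemma exists_follows (h : ℤ → ℤ) (len : ℕ) (o : ℤ)
    (hstep : ∀ x, o ≤ x → x < o + len → h (x + 1) = h x + 1 ∨ h (x + 1) = h x - 1)
    (hmin : ∀ x, o ≤ x → x ≤ o + len → h o ≤ h x) (hend : h (o + len) = h o) :
    ∃ f : ChordForest, Follows h f o ∧ 2 * f.size = len := by
  induction len using Nat.strong_induction_on generalizing o with
  | _ len ih =>
    rcases Nat.eq_zero_or_pos len with rfl | hpos
    · exact ⟨nil, trivial, rfl⟩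
    · have hup : h (o + 1) = h o + 1 := by
        have := hstep o le_rfl (by omega)
        have := hmin (o + 1) (by omega) (by omega)
        omega
      classical
      have hex : ∃ k : ℕ, 0 < k ∧ k ≤ len ∧ h (o + k) = h o := ⟨len, hpos, le_rfl, hend⟩
      obtain ⟨hk1, hk2, hk3⟩ := Nat.find_spec hex
      have hlt : ∀ m : ℕ, 0 < m → m < Nat.find hex → h o < h (o + m) := by
        intro m hm hm'
        have h1 := Nat.find_min hex hm'
        have h2 := hmin (o + m) (by omega) (by omega)
        rcases eq_or_lt_of_le h2 with h3 | h3
        · exact absurd ⟨hm, by omega, h3.symm⟩ h1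
        · exact h3
      set k := Nat.find hex with hk
      clear_value k
      have hk4 : k ≠ 1 := by
        rintro rfl
        norm_num at hk3
        omega
      obtain ⟨j, rfl⟩ : ∃ j, k = j + 2 := ⟨k - 2, by omega⟩
      have hbelow : h (o + 1 + j) = h o + 1 := by
        have h1 := hlt (j + 1) (by omega) (by omega)
        have h2 := hstep (o + 1 + j) (by omega) (by omega)
        have h3 := hmin (o + 1 + j) (by omega) (by omega)
        push_cast at h1 hk3
        rw [show o + ((j : ℤ) + 1) = o + 1 + j by ring] at h1
        rw [show o + 1 + (j : ℤ) + 1 = o + (j + 2) by ring, hk3] at h2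
        omega
      obtain ⟨a, ha, ha'⟩ := ih j (by omega) (o + 1) (fun x h1 h2 => hstep x (by omega) (by omega))
        (fun x h1 h2 => by
          have := hlt (x - o).toNat (by omega) (by omega)
          rw [show o + ((x - o).toNat : ℤ) = x by omega] at this
          omega) (by rw [hbelow, hup])
      push_cast at hk3
      obtain ⟨r, hr, hr'⟩ := ih (len - (j + 2)) (by omega) (o + (j + 2))
        (fun x h1 h2 => hstep x (by omega) (by omega))
        (fun x h1 h2 => by rw [hk3]; exact hmin x (by omega) (by omega))
        (by rw [hk3, ← hend]; congr 1; omega)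
      refine ⟨cons a r, ⟨hup, ha, ?_, ?_⟩, by simp only [size]; omega⟩
      · rw [show o + 2 * (a.size : ℤ) + 2 = o + (j + 2) by omega,
          show o + 2 * (a.size : ℤ) + 1 = o + 1 + j by omega, hk3, hbelow]
        ring
      · rwa [show o + 2 * (a.size : ℤ) + 2 = o + (j + 2) by omega]

/-- The number of chords strictly inside a chord is determined by its length. -/
lemma countP_chords {f : ChordForest} {o p q : ℤ} (hc : (p, q) ∈ f.chords o) :
    q - p + 1 = 2 * (((f.chords o).countP fun c => decide (p < c.1 ∧ c.2 < q) : ℕ) + 1) := by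
  have hin : ∀ (g : ChordForest) (o' : ℤ), p < o' → o' + 2 * g.size ≤ q →
      (g.chords o').countP (fun c => decide (p < c.1 ∧ c.2 < q)) = g.size := by
    intro g o' h1 h2
    rw [← length_chords g o', List.countP_eq_length]
    rintro ⟨p', q'⟩ h
    have := chords_range h
    rw [decide_eq_true_eq]
    constructor
    · change p < p'; omega
    · change q' < q; omega
  have hout : ∀ (g : ChordForest) (o' : ℤ), (o' + 2 * g.size ≤ p ∨ q < o') →
      (g.chords o').countP (fun c => decide (p < c.1 ∧ c.2 < q)) = 0 := by
    intro g o' h1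
    rw [List.countP_eq_zero]
    rintro ⟨p', q'⟩ h
    have := chords_range h
    rw [decide_eq_true_eq]
    change ¬ (p < p' ∧ q' < q)
    omega
  induction f generalizing o with
  | nil => simp [chords] at hc
  | cons a r iha ihr =>
    simp only [chords, List.mem_cons, List.mem_append, Prod.mk.injEq] at hc
    simp only [chords, List.countP_cons, List.countP_append, decide_eq_true_eq]
    rcases hc with ⟨rfl, rfl⟩ | hc | hc
    · rw [hin a _ (by omega) (by omega), hout r _ (by omega), if_neg (by omega)]
      push_cast; ring
    · have := chords_range hc
      rw [hout r _ (by omega), if_neg (by omega), iha hc]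
      push_cast; ring
    · have := chords_range hc
      rw [hout a _ (by omega), if_neg (by omega), ihr hc]
      push_cast; ring

lemma hookProd_eq_prod_chords (f : ChordForest) (o : ℤ) :
    f.hookProd = ((f.chords o).map fun c => qint ((c.2 - c.1 + 1) / 2).toNat).prod := by
  induction f generalizing o with
  | nil => simp [chords, hookProd]
  | cons a r iha ihr =>
    simp only [chords, hookProd, List.map_cons, List.map_append, List.prod_cons, List.prod_append,
      ← iha, ← ihr]
    rw [show ((o + 2 * (a.size : ℤ) + 1 - o + 1) / 2).toNat = a.size + 1 by omega, mul_assoc]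

/-! ### Configurations as labelings of columns and steps -/

/-- The labels `d` of the points and `e` of the steps are compatible with the given chords. -/
def Admissible (l : List (ℤ × ℤ)) (d e : ℤ → ℕ) : Prop :=
  ∀ p q, (p, q) ∈ l →
    (d (p + 1) ≤ d p ∧ d p ≤ d (p + 1) + 1) ∧ (d q ≤ d (q + 1) ∧ d (q + 1) ≤ d q + 1) ∧
    e q = e p ∧ (∀ m, p ≤ m → m ≤ q → e p ≤ e m) ∧ (∀ m, p < m → m ≤ q → e p ≤ d m)

/-- The configuration records the labels `d` and `e`, diminished by the label `b` of the
enclosing chord. -/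
def Records (d e : ℤ → ℕ) : {f : ChordForest} → Cfg f → ℤ → ℕ → Prop
  | _, .point t, o, b => d o = b + t
  | _, .node (a := a) t k ca cr, o, b =>
      d o = b + t ∧ e o = b + k ∧ e (o + 2 * a.size + 1) = b + k ∧
      Records d e ca (o + 1) (b + k) ∧ Records d e cr (o + 2 * a.size + 2) b

lemma Records.first_eq {d e : ℤ → ℕ} {f : ChordForest} {c : Cfg f} {o : ℤ} {b : ℕ}
    (H : Records d e c o b) : d o = b + first c := by
  cases c with
  | point t => exact H
  | node t k ca cr => exact H.1

lemma Records.last_eq {d e : ℤ → ℕ} {f : ChordForest} {c : Cfg f} {o : ℤ} {b : ℕ}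
    (H : Records d e c o b) : d (o + 2 * f.size) = b + last c := by
  induction c generalizing o b with
  | point t =>
    simp only [Records] at H
    simpa [size, last] using H
  | @node a r t k ca cr iha ihr =>
    have := ihr H.2.2.2.2
    simp only [size, Nat.cast_add, Nat.cast_one, last_node]
    rw [← this]
    congr 1
    ring

lemma Records.congr {d e d' e' : ℤ → ℕ} {f : ChordForest} {c : Cfg f} {o : ℤ} {b : ℕ}
    (H : Records d e c o b) (hd : ∀ x, o ≤ x → x ≤ o + 2 * f.size → d' x = d x)
    (he : ∀ x, o ≤ x → x < o + 2 * f.size → e' x = e x) : Records d' e' c o b := by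
  induction c generalizing o b with
  | point t =>
    have := hd o le_rfl (by simp [size])
    simpa [Records, this] using H
  | @node a r t k ca cr iha ihr =>
    simp only [size, Nat.cast_add, Nat.cast_one] at hd he
    obtain ⟨h1, h2, h3, h4, h5⟩ := H
    refine ⟨?_, ?_, ?_, ?_, ?_⟩
    · rw [hd _ (by omega) (by omega), h1]
    · rw [he _ (by omega) (by omega), h2]
    · rw [he _ (by omega) (by omega), h3]
    · exact iha h4 (fun x _ _ => hd x (by omega) (by omega))
        (fun x _ _ => he x (by omega) (by omega))
    · exact ihr h5 (fun x _ _ => hd x (by omega) (by omega))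
        (fun x _ _ => he x (by omega) (by omega))

lemma Records.labels_unique {d e d' e' : ℤ → ℕ} {f : ChordForest} {c : Cfg f} {o : ℤ} {b : ℕ}
    (H : Records d e c o b) (H' : Records d' e' c o b) :
    (∀ x, o ≤ x → x ≤ o + 2 * f.size → d x = d' x) ∧
      (∀ x, o ≤ x → x < o + 2 * f.size → e x = e' x) := by
  induction c generalizing o b with
  | point t =>
    simp only [size, Records] at *
    refine ⟨fun x h1 h2 => ?_, fun x h1 h2 => ?_⟩
    · obtain rfl : x = o := by omega
      omega
    · omega
  | @node a r t k ca cr iha ihr =>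
    simp only [size, Nat.cast_add, Nat.cast_one]
    obtain ⟨h1, h2, h3, h4, h5⟩ := H
    obtain ⟨h1', h2', h3', h4', h5'⟩ := H'
    obtain ⟨a1, a2⟩ := iha h4 h4'
    obtain ⟨r1, r2⟩ := ihr h5 h5'
    refine ⟨fun x hx hx' => ?_, fun x hx hx' => ?_⟩
    · by_cases e1 : x = o
      · rw [e1, h1, h1']
      · by_cases e2 : x ≤ o + 2 * a.size + 1
        · exact a1 x (by omega) (by omega)
        · exact r1 x (by omega) (by omega)
    · by_cases e1 : x = o
      · rw [e1, h2, h2']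
      · by_cases e2 : x = o + 2 * a.size + 1
        · rw [e2, h3, h3']
        · by_cases e3 : x ≤ o + 2 * a.size
          · exact a2 x (by omega) (by omega)
          · exact r2 x (by omega) (by omega)

lemma Records.cfg_unique {d e : ℤ → ℕ} {f : ChordForest} {c c' : Cfg f} {o : ℤ} {b : ℕ}
    (H : Records d e c o b) (H' : Records d e c' o b) : c = c' := by
  induction c generalizing o b with
  | point t =>
    cases c' with
    | point t' => simp only [Records] at H H'; rw [show t = t' by omega]
  | node t k ca cr iha ihr =>
    cases c' with
    | node t' k' ca' cr' =>
      obtain ⟨h1, h2, -, h4, h5⟩ := H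
      obtain ⟨h1', h2', -, h4', h5'⟩ := H'
      obtain rfl : t = t' := by omega
      obtain rfl : k = k' := by omega
      rw [iha h4 h4', ihr h5 h5']

lemma exists_records {f : ChordForest} (c : Cfg f) (o : ℤ) (b : ℕ) :
    ∃ d e : ℤ → ℕ, Records d e c o b := by
  induction c generalizing o b with
  | point t => exact ⟨fun _ => b + t, fun _ => 0, rfl⟩
  | @node a r t k ca cr iha ihr =>
    obtain ⟨d1, e1, H1⟩ := iha (o + 1) (b + k)
    obtain ⟨d2, e2, H2⟩ := ihr (o + 2 * a.size + 2) b
    refine ⟨fun x => if x = o then b + t else if x ≤ o + 2 * a.size + 1 then d1 x else d2 x,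
      fun x => if x = o ∨ x = o + 2 * a.size + 1 then b + k else
        if x ≤ o + 2 * a.size then e1 x else e2 x, by simp, by simp, by simp, ?_, ?_⟩
    · refine H1.congr (fun x _ _ => ?_) (fun x _ _ => ?_)
      · rw [if_neg (by omega), if_pos (by omega)]
      · rw [if_neg (by omega), if_pos (by omega)]
    · refine H2.congr (fun x _ _ => ?_) (fun x _ _ => ?_)
      · rw [if_neg (by omega), if_neg (by omega)]
      · rw [if_neg (by omega), if_neg (by omega)]

lemma Records.admissible {d e : ℤ → ℕ} {f : ChordForest} {c : Cfg f} {o : ℤ} {b : ℕ}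
    (H : Records d e c o b) (hv : Valid c) :
    Admissible (f.chords o) d e ∧ (∀ m, o ≤ m → m ≤ o + 2 * f.size → b ≤ d m) ∧
      (∀ m, o ≤ m → m < o + 2 * f.size → b ≤ e m) := by
  induction c generalizing o b with
  | point t =>
    refine ⟨by simp [Admissible, chords], fun m h1 h2 => ?_, fun m h1 h2 => ?_⟩
    · simp only [size] at h2
      obtain rfl : m = o := by omega
      simp only [Records] at H
      omega
    · simp only [size] at h2; omega
  | @node a r t k ca cr iha ihr =>
    obtain ⟨h1, h2, h3, h4, h5⟩ := H
    obtain ⟨v1, v2, v3, v4⟩ := hv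
    obtain ⟨a1, a2, a3⟩ := iha h4 v3
    obtain ⟨r1, r2, r3⟩ := ihr h5 v4
    have f1 := h4.first_eq
    have f2 := h4.last_eq
    have f3 := h5.first_eq
    rw [show o + 1 + 2 * (a.size : ℤ) = o + 2 * a.size + 1 by ring] at f2
    simp only [size, Nat.cast_add, Nat.cast_one]
    refine ⟨?_, fun m hm hm' => ?_, fun m hm hm' => ?_⟩
    · intro p q hc
      simp only [chords, List.mem_cons, List.mem_append, Prod.mk.injEq] at hc
      rcases hc with ⟨rfl, rfl⟩ | hc | hc
      · rw [show p + 2 * (a.size : ℤ) + 1 + 1 = p + 2 * a.size + 2 by ring]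
        refine ⟨by omega, by omega, by omega, fun m hm hm' => ?_, fun m hm hm' => ?_⟩
        · by_cases e1 : m = p
          · rw [e1]
          · by_cases e2 : m = p + 2 * a.size + 1
            · rw [e2, h2, h3]
            · have := a3 m (by omega) (by omega); omega
        · have := a2 m (by omega) (by omega); omega
      · exact a1 p q hc
      · exact r1 p q hc
    · by_cases e1 : m = o
      · rw [e1]; omega
      · by_cases e2 : m ≤ o + 2 * a.size + 1
        · have := a2 m (by omega) (by omega); omega
        · exact r2 m (by omega) (by omega)
    · by_cases e1 : m = o
      · rw [e1]; omega
      · by_cases e2 : m = o + 2 * a.size + 1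
        · rw [e2]; omega
        · by_cases e3 : m ≤ o + 2 * a.size
          · have := a3 m (by omega) (by omega); omega
          · exact r3 m (by omega) (by omega)

lemma Admissible.exists_cfg {d e : ℤ → ℕ} {f : ChordForest} {o : ℤ} {b : ℕ}
    (H : Admissible (f.chords o) d e) (hd : ∀ m, o ≤ m → m ≤ o + 2 * f.size → b ≤ d m)
    (he : ∀ m, o ≤ m → m < o + 2 * f.size → b ≤ e m) :
    ∃ c : Cfg f, Valid c ∧ Records d e c o b := by
  induction f generalizing o b with
  | nil =>
    have := hd o le_rfl (by simp [size])
    exact ⟨.point (d o - b), trivial, by simp only [Records]; omega⟩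
  | cons a r iha ihr =>
    simp only [size, Nat.cast_add, Nat.cast_one] at hd he
    obtain ⟨g1, g2, g3, g4, g5⟩ := H o (o + 2 * a.size + 1) (by simp [chords])
    obtain ⟨ca, va, ra⟩ := iha (o := o + 1) (b := e o)
      (fun p q hc => H p q (by simp [chords, hc]))
      (fun m _ _ => g5 m (by omega) (by omega)) (fun m _ _ => g4 m (by omega) (by omega))
    obtain ⟨cr, vr, rr⟩ := ihr (o := o + 2 * a.size + 2) (b := b)
      (fun p q hc => H p q (by simp [chords, hc]))
      (fun m _ _ => hd m (by omega) (by omega)) (fun m _ _ => he m (by omega) (by omega))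
    have f1 := ra.first_eq
    have f2 := ra.last_eq
    have f3 := rr.first_eq
    rw [show o + 1 + 2 * (a.size : ℤ) = o + 2 * a.size + 1 by ring] at f2
    rw [show o + 2 * (a.size : ℤ) + 1 + 1 = o + 2 * a.size + 2 by ring] at g2
    have b1 := hd o (by omega) (by omega)
    have b2 := he o (by omega) (by omega)
    refine ⟨.node (d o - b) (e o - b) ca cr, ⟨by omega, by omega, va, vr⟩,
      by omega, by omega, by omega, ?_, rr⟩
    rwa [Nat.add_sub_cancel' b2]

lemma Records.two_mul_sum {d e : ℤ → ℕ} {f : ChordForest} {c : Cfg f} {o : ℤ} {b : ℕ}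
    (H : Records d e c o b) :
    2 * ∑ x ∈ Finset.Ico o (o + 2 * f.size + 1), d x =
      ∑ x ∈ Finset.Ico o (o + 2 * f.size), e x + 2 * weight c + b * (2 * f.size + 2) := by
  have hcons : ∀ (g : ℤ → ℕ) (x y : ℤ), x < y →
      ∑ z ∈ Finset.Ico x y, g z = g x + ∑ z ∈ Finset.Ico (x + 1) y, g z := by
    intro g x y hxy
    rw [← Finset.insert_Ico_add_one_left_eq_Ico hxy, Finset.sum_insert (by simp)]
  have hsplit : ∀ (g : ℤ → ℕ) (x y z : ℤ), x ≤ y → y ≤ z →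
      ∑ w ∈ Finset.Ico x z, g w = ∑ w ∈ Finset.Ico x y, g w + ∑ w ∈ Finset.Ico y z, g w := by
    intro g x y z hxy hyz
    rw [← Finset.Ico_union_Ico_eq_Ico hxy hyz,
      Finset.sum_union (Finset.Ico_disjoint_Ico_consecutive _ _ _)]
  induction c generalizing o b with
  | point t =>
    simp only [Records] at H
    simp [size, weight, hcons _ o (o + 1), H]
    ring
  | @node a r t k ca cr iha ihr =>
    obtain ⟨h1, h2, h3, h4, h5⟩ := H
    have e1 := iha h4
    have e2 := ihr h5
    simp only [size, weight, Nat.cast_add, Nat.cast_one]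
    rw [hcons d _ _ (by omega), hcons e _ _ (by omega),
      hsplit d (o + 1) (o + 1 + 2 * a.size + 1) _ (by omega) (by omega),
      hsplit e (o + 1) (o + 1 + 2 * a.size) _ (by omega) (by omega),
      hcons e (o + 1 + 2 * a.size) _ (by omega),
      show o + 2 * ((a.size : ℤ) + 1 + r.size) = o + 2 * a.size + 2 + 2 * r.size by ring,
      show o + 1 + 2 * (a.size : ℤ) + 1 = o + 2 * a.size + 2 by ring]
    rw [show o + 1 + 2 * (a.size : ℤ) + 1 = o + 2 * a.size + 2 by ring] at e1
    rw [mul_add, mul_add, e1, e2, show o + 1 + 2 * (a.size : ℤ) = o + 2 * a.size + 1 by ring, h1,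
      h2, h3]
    ring

end ChordForest

/-! ### Height functions of Dyck paths -/

/-- The number of up-steps minus the number of down-steps before position `y`. -/
def stepSum {N : ℕ} (s : Fin N → Bool) (y : ℤ) : ℤ :=
  ((univ.filter fun i : Fin N => ((i : ℕ) : ℤ) < y ∧ s i = true).card : ℤ) -
    ((univ.filter fun i : Fin N => ((i : ℕ) : ℤ) < y ∧ s i = false).card : ℤ)

lemma stepSum_eq_sum {N : ℕ} (s : Fin N → Bool) (y : ℤ) :
    stepSum s y = ∑ i : Fin N, if ((i : ℕ) : ℤ) < y then (if s i = true then 1 else -1) else 0 := by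
  simp only [stepSum, card_filter, Nat.cast_sum, ← sum_sub_distrib]
  refine sum_congr rfl fun i _ => ?_
  cases s i <;> by_cases h : ((i : ℕ) : ℤ) < y <;> simp [h]

lemma stepSum_nonpos {N : ℕ} (s : Fin N → Bool) {y : ℤ} (hy : y ≤ 0) : stepSum s y = 0 := by
  rw [stepSum_eq_sum]
  exact sum_eq_zero fun i _ => if_neg (by omega)

lemma stepSum_succ {N : ℕ} (s : Fin N → Bool) (i : Fin N) :
    stepSum s (((i : ℕ) : ℤ) + 1) = stepSum s (i : ℕ) + if s i = true then 1 else -1 := by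
  rw [← sub_eq_iff_eq_add', stepSum_eq_sum, stepSum_eq_sum, ← sum_sub_distrib,
    sum_eq_single i]
  · simp
  · intro j _ hj
    have : (j : ℕ) ≠ i := fun h => hj (Fin.ext h)
    have e : (((j : ℕ) : ℤ) < ((i : ℕ) : ℤ) + 1) ↔ ((j : ℕ) : ℤ) < (i : ℕ) := by omega
    simp [e]
  · simp

lemma stepSum_full {N : ℕ} (s : Fin N → Bool) {y : ℤ} (hy : (N : ℤ) ≤ y) :
    stepSum s y = 2 * ((univ.filter fun i => s i = true).card : ℤ) - N := by
  have h1 : ∀ i : Fin N, ((i : ℕ) : ℤ) < y := fun i => by omega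
  have h2 := card_filter_add_card_filter_not (s := (univ : Finset (Fin N))) fun i => s i = true
  simp only [Bool.not_eq_true, card_univ, Fintype.card_fin] at h2
  simp only [stepSum, h1, true_and]
  omega

namespace DyckPath

variable {n : ℕ} (P : DyckPath n)

lemma ht_eq_stepSum (x : ℤ) : P.ht x = stepSum P.step (x + n) := rfl

lemma ht_step (i : Fin (2 * n)) :
    P.ht ((i : ℕ) - n + 1) = P.ht ((i : ℕ) - n) + if P.step i = true then 1 else -1 := by
  have := stepSum_succ P.step i
  rw [ht_eq_stepSum, ht_eq_stepSum]
  convert this using 2 <;> ring_nf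

lemma ht_of_le {x : ℤ} (hx : x ≤ -n) : P.ht x = 0 :=
  stepSum_nonpos _ (by omega)

lemma ht_of_ge {x : ℤ} (hx : (n : ℤ) ≤ x) : P.ht x = 0 := by
  rw [ht_eq_stepSum, stepSum_full _ (by push_cast; omega), P.balanced]
  push_cast; ring

lemma ht_nonneg (x : ℤ) : 0 ≤ P.ht x := by
  rcases le_or_gt x (-n) with h | h
  · exact (P.ht_of_le h).ge
  rcases le_or_gt (n : ℤ) x with h' | h'
  · exact (P.ht_of_ge h').ge
  have h0 := P.nonneg (x + n).toNat (by omega)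
  have e : ∀ i : Fin (2 * n), ((i : ℕ) < (x + n).toNat) ↔ ((i : ℕ) : ℤ) < x + n :=
    fun i => by omega
  simp only [e] at h0
  rw [ht]
  omega

lemma ht_succ {x : ℤ} (h1 : -(n : ℤ) ≤ x) (h2 : x < n) :
    P.ht (x + 1) = P.ht x + 1 ∨ P.ht (x + 1) = P.ht x - 1 := by
  have := P.ht_step ⟨(x + n).toNat, by omega⟩
  have e : (((x + n).toNat : ℕ) : ℤ) - n = x := by omega
  simp only [e] at this
  split_ifs at this <;> omega

lemma ht_parity {x : ℤ} (h1 : -(n : ℤ) ≤ x) (h2 : x ≤ n) : (P.ht x - x - n) % 2 = 0 := by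
  induction x, h1 using Int.leInduction with
  | base => simp [P.ht_of_le le_rfl]
  | succ x h1 ih =>
    have := ih (by omega)
    rcases P.ht_succ h1 (by omega) with h | h <;> omega

lemma ht_le_add {x : ℤ} (h1 : -(n : ℤ) ≤ x) (h2 : x ≤ n) : P.ht x ≤ x + n := by
  induction x, h1 using Int.leInduction with
  | base => simp [P.ht_of_le le_rfl]
  | succ x h1 ih =>
    have := ih (by omega)
    rcases P.ht_succ h1 (by omega) with h | h <;> omega

lemma ht_le_sub {x : ℤ} (h1 : -(n : ℤ) ≤ x) (h2 : x ≤ n) : P.ht x ≤ n - x := by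
  induction x, h2 using Int.leInductionDown with
  | base => simp [P.ht_of_ge le_rfl]
  | pred x h2 ih =>
    have := ih (by omega)
    rcases P.ht_succ (x := x - 1) (by omega) (by omega) with h | h <;>
      rw [sub_add_cancel] at h <;> omega

lemma ht_le {x : ℤ} : P.ht x ≤ n := by
  rcases le_or_gt x (-n) with h | h
  · rw [P.ht_of_le h]; omega
  rcases le_or_gt (n : ℤ) x with h' | h'
  · rw [P.ht_of_ge h']; omega
  have := P.ht_le_add h.le h'.le
  have := P.ht_le_sub h.le h'.le
  omega

variable {P} in
lemma ext_ht {Q : DyckPath n} (h : ∀ x, -(n : ℤ) ≤ x → x ≤ n → P.ht x = Q.ht x) : P = Q := by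
  have hs : P.step = Q.step := by
    funext i
    have h1 := P.ht_step i
    have h2 := Q.ht_step i
    rw [h _ (by omega) (by omega), h _ (by omega) (by omega)] at h1
    cases hP : P.step i <;> cases hQ : Q.step i <;> simp [hP, hQ] at h1 h2 ⊢ <;> omega
  cases P; cases Q; simpa using hs

lemma exists_ht_eq (H : ℤ → ℤ) (hl : H (-n) = 0) (hr : H n = 0)
    (hnonneg : ∀ x, -(n : ℤ) ≤ x → x ≤ n → 0 ≤ H x)
    (hstep : ∀ x, -(n : ℤ) ≤ x → x < n → H (x + 1) = H x + 1 ∨ H (x + 1) = H x - 1) :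
    ∃ Q : DyckPath n, ∀ x, -(n : ℤ) ≤ x → x ≤ n → Q.ht x = H x := by
  let s : Fin (2 * n) → Bool := fun i => decide (H ((i : ℕ) - n + 1) = H ((i : ℕ) - n) + 1)
  have key : ∀ x, -(n : ℤ) ≤ x → x ≤ n → stepSum s (x + n) = H x := by
    intro x h1
    induction x, h1 using Int.leInduction with
    | base => intro _; rw [hl]; exact stepSum_nonpos _ (by omega)
    | succ x h1 ih =>
      intro h2
      have := stepSum_succ s ⟨(x + n).toNat, by omega⟩
      have e : (((x + n).toNat : ℕ) : ℤ) = x + n := by omega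
      simp only [e, s, add_sub_cancel_right] at this
      rw [show x + 1 + n = x + n + 1 by ring, this, ih (by omega)]
      rcases hstep x h1 (by omega) with h | h <;> simp [h]; omega
  refine ⟨⟨s, ?_, fun k hk => ?_⟩, key⟩
  · have h1 := key n (by omega) le_rfl
    rw [hr, stepSum_full _ (by push_cast; omega)] at h1
    push_cast at h1
    omega
  · have h1 := key (k - n) (by omega) (by omega)
    have h2 := hnonneg (k - n) (by omega) (by omega)
    simp only [stepSum, sub_add_cancel, Nat.cast_lt] at h1
    omega

lemma exists_forest : ∃ f : ChordForest, ChordForest.Follows P.ht f (-n) ∧ f.size = n := by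
  obtain ⟨f, hf, hs⟩ := ChordForest.exists_follows P.ht (2 * n) (-n)
    (fun x h1 h2 => P.ht_succ h1 (by push_cast at h2; omega))
    (fun x _ _ => by rw [P.ht_of_le le_rfl]; exact P.ht_nonneg x)
    (by rw [P.ht_of_le le_rfl, P.ht_of_ge (by push_cast; omega)])
  exact ⟨f, hf, by omega⟩

end DyckPath

/-! ### Runs: the tiles described by labels on the steps -/

/-- All steps between the columns `x` and `y` have a label exceeding `k`. -/
def Run (e : ℤ → ℕ) (k : ℕ) (x y : ℤ) : Prop := ∀ m, min x y ≤ m → m < max x y → k < e m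

namespace Run

variable {e : ℤ → ℕ} {k : ℕ} {x y z : ℤ}

lemma refl (x : ℤ) : Run e k x x := fun m h1 h2 => by omega

lemma symm (H : Run e k x y) : Run e k y x := fun m h1 h2 => H m (by omega) (by omega)

lemma trans (H : Run e k x y) (H' : Run e k y z) : Run e k x z := fun m h1 h2 => by
  by_cases h : min x y ≤ m ∧ m < max x y
  · exact H m h.1 h.2
  · exact H' m (by omega) (by omega)

lemma mono {l : ℕ} (hl : l ≤ k) (H : Run e k x y) : Run e l x y :=
  fun m h1 h2 => hl.trans_lt (H m h1 h2)

lemma succ_iff : Run e k x (x + 1) ↔ k < e x :=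
  ⟨fun H => H x (by omega) (by omega), fun H m h1 h2 => by
    obtain rfl : m = x := by omega
    exact H⟩

end Run

open Classical in
/-- The set of cells in layer `k` above the path `h` that are joined to column `x`. -/
def runTile (n : ℕ) (h : ℤ → ℤ) (e : ℤ → ℕ) (x : ℤ) (k : ℕ) : Finset (ℤ × ℤ) :=
  ((Icc (-(n : ℤ)) n).filter (Run e k x)).image fun y => (y, h y + 2 * k)

/-- The collection of all sets `runTile` based on the cells below level `d`. -/
def runTiles (n : ℕ) (h : ℤ → ℤ) (d e : ℤ → ℕ) : Finset (Finset (ℤ × ℤ)) :=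
  ((Icc (-(n : ℤ)) n).sigma fun x => range (d x)).image fun c => runTile n h e c.1 c.2

section Labels

variable {n : ℕ} {h : ℤ → ℤ} {d e : ℤ → ℕ}

lemma mem_runTile {x y z : ℤ} {k : ℕ} : (y, z) ∈ runTile n h e x k ↔
    -(n : ℤ) ≤ y ∧ y ≤ n ∧ Run e k x y ∧ z = h y + 2 * k := by
  simp only [runTile, mem_image, mem_filter, mem_Icc, Prod.mk.injEq]
  constructor
  · rintro ⟨w, ⟨⟨h1, h2⟩, h3⟩, rfl, rfl⟩
    exact ⟨h1, h2, h3, rfl⟩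
  · rintro ⟨h1, h2, h3, rfl⟩
    exact ⟨y, ⟨⟨h1, h2⟩, h3⟩, rfl, rfl⟩

lemma mem_runTiles {t : Finset (ℤ × ℤ)} : t ∈ runTiles n h d e ↔
    ∃ (x : ℤ) (k : ℕ), -(n : ℤ) ≤ x ∧ x ≤ n ∧ k < d x ∧ runTile n h e x k = t := by
  simp only [runTiles, mem_image, mem_sigma, mem_Icc, mem_range, Sigma.exists]
  simp only [and_assoc]

lemma runTile_eq_of_run {x y : ℤ} {k : ℕ} (H : Run e k x y) :
    runTile n h e x k = runTile n h e y k := by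
  ext ⟨z, w⟩
  simp only [mem_runTile]
  exact ⟨fun ⟨h1, h2, h3, h4⟩ => ⟨h1, h2, H.symm.trans h3, h4⟩,
    fun ⟨h1, h2, h3, h4⟩ => ⟨h1, h2, H.trans h3, h4⟩⟩

/-- Labels vanish outside of the interval `[-n, n]`, and every joined pair of columns lies
below level `d`. -/
structure Bounded (n : ℕ) (d e : ℤ → ℕ) : Prop where
  left : ∀ x k, k < e x → -(n : ℤ) ≤ x
  right : ∀ x k, k < e x → x < n
  le : ∀ x, e x ≤ d x
  le_succ : ∀ x, e x ≤ d (x + 1)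

namespace Bounded

lemma lt_of_run (B : Bounded n d e) {x y : ℤ} {k : ℕ} (hx : k < d x) (H : Run e k x y) : k < d y := by
  rcases lt_trichotomy x y with hxy | rfl | hxy
  · have := (H (y - 1) (by omega) (by omega)).trans_le (B.le_succ (y - 1))
    rwa [sub_add_cancel] at this
  · exact hx
  · exact (H y (by omega) (by omega)).trans_le (B.le y)

/-- The columns of a run form an interval, at the ends of which the labels drop. -/
lemma exists_interval (B : Bounded n d e) {x : ℤ} {k : ℕ} (h1 : -(n : ℤ) ≤ x) (h2 : x ≤ n) :
    ∃ a b : ℤ, a ≤ x ∧ x ≤ b ∧ -(n : ℤ) ≤ a ∧ b ≤ n ∧ ¬ k < e (a - 1) ∧ ¬ k < e b ∧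
      (∀ m, a ≤ m → m < b → k < e m) ∧
      ∀ y, (-(n : ℤ) ≤ y ∧ y ≤ n ∧ Run e k x y) ↔ a ≤ y ∧ y ≤ b := by
  classical
  let S := (Icc (-(n : ℤ)) n).filter (Run e k x)
  have hS : ∀ y, y ∈ S ↔ -(n : ℤ) ≤ y ∧ y ≤ n ∧ Run e k x y := fun y => by
    simp only [S, mem_filter, mem_Icc, and_assoc]
  have hx : x ∈ S := (hS x).2 ⟨h1, h2, Run.refl x⟩
  obtain ⟨a, ha, hmin⟩ := S.exists_min_image id ⟨x, hx⟩
  obtain ⟨b, hb, hmax⟩ := S.exists_max_image id ⟨x, hx⟩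
  have hax : a ≤ x := hmin x hx
  have hxb : x ≤ b := hmax x hx
  obtain ⟨a1, a2, a3⟩ := (hS a).1 ha
  obtain ⟨b1, b2, b3⟩ := (hS b).1 hb
  refine ⟨a, b, hax, hxb, a1, b2, fun hlt => ?_, fun hlt => ?_, fun m m1 m2 =>
    a3.symm.trans b3 m (by omega) (by omega), fun y => ⟨fun hy => ?_, fun ⟨y1, y2⟩ => ?_⟩⟩
  · have hr : Run e k (a - 1) a := by
      have := Run.succ_iff.2 hlt
      rwa [sub_add_cancel] at this
    have := hmin (a - 1) ((hS _).2 ⟨B.left _ _ hlt, by omega, a3.trans hr.symm⟩)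
    simp only [id] at this
    omega
  · have := hmax (b + 1) ((hS _).2 ⟨by omega, by have := B.right _ _ hlt; omega,
      b3.trans (Run.succ_iff.2 hlt)⟩)
    simp only [id] at this
    omega
  · exact ⟨hmin y ((hS y).2 hy), hmax y ((hS y).2 hy)⟩
  · refine ⟨by omega, by omega, fun m m1 m2 => a3.symm.trans b3 m (by omega) (by omega)⟩

/-- Tiles are counted by their rightmost cells. -/
lemma card_runTiles (B : Bounded n d e) :
    (runTiles n h d e).card = ∑ x ∈ Icc (-(n : ℤ)) n, (d x - e x) := by
  have himage : runTiles n h d e =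
      ((Icc (-(n : ℤ)) n).sigma fun x => Ico (e x) (d x)).image fun c => runTile n h e c.1 c.2 := by
    ext t
    rw [mem_runTiles]
    simp only [mem_image, mem_sigma, mem_Icc, mem_Ico, Sigma.exists]
    constructor
    · rintro ⟨x, k, h1, h2, hk, rfl⟩
      obtain ⟨a, b, hax, hxb, han, hbn, -, hb, -, hrun⟩ := B.exists_interval (k := k) h1 h2
      have hr := ((hrun b).2 ⟨by omega, le_rfl⟩).2.2
      exact ⟨b, k, ⟨⟨by omega, hbn⟩, by omega, B.lt_of_run hk hr⟩, (runTile_eq_of_run hr).symm⟩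
    · rintro ⟨x, k, ⟨⟨h1, h2⟩, -, hk⟩, rfl⟩
      exact ⟨x, k, h1, h2, hk, rfl⟩
  rw [himage, card_image_of_injOn]
  · simp
  · rintro ⟨x, k⟩ hx ⟨y, l⟩ hy hxy
    simp only [coe_sigma, Set.mem_sigma_iff, mem_coe, mem_Icc, mem_Ico] at hx hy
    have h1 : (x, h x + 2 * k) ∈ runTile n h e y l := by
      rw [← show runTile n h e x k = runTile n h e y l from hxy]
      exact mem_runTile.2 ⟨hx.1.1, hx.1.2, Run.refl x, rfl⟩
    obtain ⟨-, -, hr, hkl⟩ := mem_runTile.1 h1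
    obtain rfl : k = l := by omega
    rcases lt_trichotomy x y with hlt | rfl | hlt
    · have := hr x (by omega) (by omega); omega
    · rfl
    · have := hr y (by omega) (by omega); omega

end Bounded

end Labels

/-! ### The cells of a skew shape -/

/-- The number of cells above column `x` between two paths. -/
def pathGap {n : ℕ} (lam mu : DyckPath n) (x : ℤ) : ℕ := ((mu.ht x - lam.ht x) / 2).toNat

section Gap

variable {n : ℕ} {lam mu : DyckPath n}

lemma pathGap_of_le {x : ℤ} (hx : x ≤ -(n : ℤ)) : pathGap lam mu x = 0 := by
  simp [pathGap, DyckPath.ht_of_le _ hx]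

lemma pathGap_of_ge {x : ℤ} (hx : (n : ℤ) ≤ x) : pathGap lam mu x = 0 := by
  simp [pathGap, DyckPath.ht_of_ge _ hx]

lemma ht_eq_add_pathGap (hle : ∀ x, lam.ht x ≤ mu.ht x) (x : ℤ) :
    mu.ht x = lam.ht x + 2 * pathGap lam mu x := by
  rcases le_or_gt x (-n) with h | h
  · simp [pathGap_of_le h, DyckPath.ht_of_le _ h]
  rcases le_or_gt (n : ℤ) x with h' | h'
  · simp [pathGap_of_ge h', DyckPath.ht_of_ge _ h']
  have h1 := lam.ht_parity h.le h'.le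
  have h2 := mu.ht_parity h.le h'.le
  have h3 := hle x
  rw [pathGap]
  omega

lemma mem_skewCells (hle : ∀ x, lam.ht x ≤ mu.ht x) {x z : ℤ} :
    (x, z) ∈ skewCells lam mu ↔ ∃ k < pathGap lam mu x, z = lam.ht x + 2 * k := by
  have h1 := ht_eq_add_pathGap hle x
  have h2 := lam.ht_nonneg x
  have h3 : mu.ht x ≤ n := mu.ht_le
  simp only [skewCells, mem_filter, mem_product, mem_Icc]
  constructor
  · rintro ⟨⟨⟨h4, h5⟩, h6, h7⟩, h8, h9, h10⟩
    have := lam.ht_parity h4 h5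
    exact ⟨((z - lam.ht x) / 2).toNat, by omega, by omega⟩
  · rintro ⟨k, hk, rfl⟩
    have h4 : -(n : ℤ) ≤ x := by
      by_contra hx
      rw [pathGap_of_le (by omega)] at hk
      omega
    have h5 : x ≤ n := by
      by_contra hx
      rw [pathGap_of_ge (by omega)] at hk
      omega
    have := lam.ht_parity h4 h5
    omega

lemma card_skewCells (hle : ∀ x, lam.ht x ≤ mu.ht x) :
    (skewCells lam mu).card = ∑ x ∈ Icc (-(n : ℤ)) n, pathGap lam mu x := by
  have : skewCells lam mu = ((Icc (-(n : ℤ)) n).sigma fun x => range (pathGap lam mu x)).image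
      fun c => (c.1, lam.ht c.1 + 2 * (c.2 : ℤ)) := by
    ext ⟨x, z⟩
    rw [mem_skewCells hle]
    simp only [mem_image, mem_sigma, mem_Icc, mem_range, Sigma.exists, Prod.mk.injEq]
    constructor
    · rintro ⟨k, hk, rfl⟩
      refine ⟨x, k, ⟨⟨?_, ?_⟩, hk⟩, rfl, rfl⟩
      · by_contra hx
        rw [pathGap_of_le (by omega)] at hk
        omega
      · by_contra hx
        rw [pathGap_of_ge (by omega)] at hk
        omega
    · rintro ⟨y, k, ⟨-, hk⟩, rfl, rfl⟩
      exact ⟨k, hk, rfl⟩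
  rw [this, card_image_of_injOn]
  · simp
  · rintro ⟨x, k⟩ - ⟨y, l⟩ - hxy
    simp only [Prod.mk.injEq] at hxy
    obtain ⟨rfl, hkl⟩ := hxy
    obtain rfl : k = l := by omega
    rfl

end Gap

/-! ### The structure of cover-inclusive tilings -/

namespace DyckTiling

variable {n : ℕ} (T : DyckTiling n)

/-- The number of cells of the tiling above column `x`. -/
def depth (x : ℤ) : ℕ := pathGap T.lower T.upper x

lemma upper_ht (x : ℤ) : T.upper.ht x = T.lower.ht x + 2 * T.depth x :=
  ht_eq_add_pathGap T.below x

variable {T}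

lemma lt_depth_of_mem {t : Finset (ℤ × ℤ)} (ht : t ∈ T.tiles) {x z : ℤ} (h : (x, z) ∈ t) :
    ∃ k < T.depth x, z = T.lower.ht x + 2 * k := by
  rw [depth, ← mem_skewCells T.below, ← T.cover]
  exact mem_biUnion.2 ⟨t, ht, h⟩

lemma exists_mem_of_lt_depth {x : ℤ} {k : ℕ} (hk : k < T.depth x) :
    ∃ t ∈ T.tiles, (x, T.lower.ht x + 2 * (k : ℤ)) ∈ t := by
  have : (x, T.lower.ht x + 2 * (k : ℤ)) ∈ T.tiles.biUnion id := by
    rw [T.cover, mem_skewCells T.below]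
    exact ⟨k, hk, rfl⟩
  simpa using this

lemma eq_of_mem {t u : Finset (ℤ × ℤ)} (ht : t ∈ T.tiles) (hu : u ∈ T.tiles) {c : ℤ × ℤ}
    (hct : c ∈ t) (hcu : c ∈ u) : t = u := by
  by_contra hne
  exact disjoint_left.1 (T.disj t ht u hu hne) hct hcu

lemma range_of_lt_depth {x : ℤ} {k : ℕ} (hk : k < T.depth x) : -(n : ℤ) < x ∧ x < n := by
  constructor
  · by_contra hx
    rw [depth, pathGap_of_le (by omega)] at hk
    omega
  · by_contra hx
    rw [depth, pathGap_of_ge (by omega)] at hk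
    omega

/-- A tile of a cover-inclusive tiling stays in one layer, measured from the lower path. -/
lemma CoverInclusive.not_mem_next_layer (hT : T.CoverInclusive) (k : ℕ) :
    ∀ t ∈ T.tiles, ∀ x y : ℤ, (y = x + 1 ∨ x = y + 1) →
      (x, T.lower.ht x + 2 * (k : ℤ)) ∈ t →
      (y, T.lower.ht y + 2 * ((k : ℤ) + 1)) ∉ t := by
  have adj : ∀ t ∈ T.tiles, ∀ x z w : ℤ, (x, z) ∈ t → (x + 1, w) ∈ t → w = z + 1 ∨ w = z - 1 := by
    intro t ht x z w h1 h2
    obtain ⟨a, b, f, -, hf, -, -, rfl⟩ := T.isDyck t ht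
    simp only [mem_image, mem_Icc, Prod.mk.injEq] at h1 h2
    obtain ⟨_, ⟨h3, h4⟩, rfl, rfl⟩ := h1
    obtain ⟨_, ⟨h5, h6⟩, rfl, rfl⟩ := h2
    exact hf _ h3 (by omega)
  have adj' : ∀ t ∈ T.tiles, ∀ x y z w : ℤ, (y = x + 1 ∨ x = y + 1) → (x, z) ∈ t → (y, w) ∈ t →
      w = z + 1 ∨ w = z - 1 := by
    rintro t ht x y z w (rfl | rfl) h1 h2
    · exact adj t ht _ _ _ h1 h2
    · have := adj t ht _ _ _ h2 h1
      omega
  have inj : ∀ t ∈ T.tiles, ∀ x z w : ℤ, (x, z) ∈ t → (x, w) ∈ t → z = w := by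
    intro t ht x z w h1 h2
    obtain ⟨a, b, f, -, -, -, -, rfl⟩ := T.isDyck t ht
    simp only [mem_image, mem_Icc, Prod.mk.injEq] at h1 h2
    obtain ⟨_, -, rfl, rfl⟩ := h1
    obtain ⟨_, -, rfl, rfl⟩ := h2
    rfl
  induction k using Nat.strong_induction_on with
  | _ k ih =>
    intro t ht x y hxy h1 h2
    obtain ⟨l, hl, hl'⟩ := lt_depth_of_mem ht h2
    obtain ⟨j, hj, -⟩ := lt_depth_of_mem ht h1
    obtain ⟨u, hu, hyu⟩ := exists_mem_of_lt_depth (T := T) (x := y) (k := k) (by omega)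
    obtain ⟨w, hw : (x, w) ∈ u⟩ := hT t ht u hu ⟨_, h2, _, hyu, rfl, by simp⟩ _ h1
    obtain ⟨m, hm, rfl⟩ := lt_depth_of_mem hu hw
    have e1 := adj' t ht _ _ _ _ hxy h1 h2
    have e2 := adj' u hu _ _ _ _ hxy hw hyu
    have hstep : T.lower.ht y = T.lower.ht x + 1 ∨ T.lower.ht y = T.lower.ht x - 1 := by
      have r1 := range_of_lt_depth hl
      have r2 := range_of_lt_depth hj
      rcases hxy with rfl | rfl
      · exact T.lower.ht_succ (by omega) (by omega)
      · have := T.lower.ht_succ (x := y) (by omega) (by omega)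
        omega
    by_cases hmk : m = k
    · subst hmk
      obtain rfl := eq_of_mem ht hu h1 hw
      have := inj t ht _ _ _ h2 hyu
      omega
    · obtain rfl : k = m + 1 := by omega
      exact ih m (by omega) u hu x y hxy hw (by push_cast at hyu; exact hyu)

/-- The shape of a tile in a cover-inclusive tiling: it is a translate of a part of the lower
path. -/
lemma CoverInclusive.exists_interval (hT : T.CoverInclusive) {t : Finset (ℤ × ℤ)}
    (ht : t ∈ T.tiles) : ∃ (a b : ℤ) (k : ℕ), a ≤ b ∧ T.lower.ht b = T.lower.ht a ∧
      (∀ x, a ≤ x → x ≤ b → T.lower.ht a ≤ T.lower.ht x) ∧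
      ∀ x z, (x, z) ∈ t ↔ a ≤ x ∧ x ≤ b ∧ z = T.lower.ht x + 2 * k := by
  obtain ⟨a, b, f, hab, -, hend, hmin, htf⟩ := T.isDyck t ht
  have hmem : ∀ x, a ≤ x → x ≤ b → (x, f x) ∈ t := fun x h1 h2 => by
    rw [htf]
    exact mem_image_of_mem _ (mem_Icc.2 ⟨h1, h2⟩)
  obtain ⟨k, -, hfa⟩ := lt_depth_of_mem ht (hmem a le_rfl hab)
  have hf : ∀ x, a ≤ x → x ≤ b → f x = T.lower.ht x + 2 * k := by
    intro x h1
    induction x, h1 using Int.leInduction with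
    | base => exact fun _ => hfa
    | succ x h1 ih =>
      intro h2
      have hx := hmem x h1 (by omega)
      have hx' := hmem (x + 1) (by omega) h2
      obtain ⟨j, hj, -⟩ := lt_depth_of_mem ht hx
      obtain ⟨l, hl, hl'⟩ := lt_depth_of_mem ht hx'
      have r1 := range_of_lt_depth hl
      have r2 := range_of_lt_depth hj
      rw [ih (by omega)] at hx
      rw [hl'] at hx'
      have hne1 : l ≠ k + 1 := by
        rintro rfl
        exact hT.not_mem_next_layer k t ht x (x + 1) (Or.inl rfl) hx (by push_cast at hx'; exact hx')
      have hne2 : k ≠ l + 1 := by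
        rintro rfl
        exact hT.not_mem_next_layer l t ht (x + 1) x (Or.inr rfl) hx' (by push_cast at hx; exact hx)
      have h3 := T.lower.ht_succ (x := x) (by omega) (by omega)
      obtain ⟨a', b', g, -, hg, -, -, rfl⟩ := T.isDyck t ht
      simp only [mem_image, mem_Icc, Prod.mk.injEq] at hx hx'
      obtain ⟨_, ⟨h5, -⟩, rfl, h4⟩ := hx
      obtain ⟨_, ⟨-, h6⟩, rfl, h7⟩ := hx'
      have := hg _ h5 (by omega)
      omega
  refine ⟨a, b, k, hab, ?_, fun x h1 h2 => ?_, fun x z => ?_⟩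
  · have := hf a le_rfl hab
    have := hf b hab le_rfl
    omega
  · have := hf a le_rfl hab
    have := hf x h1 h2
    have := hmin x h1 h2
    omega
  · rw [htf]
    simp only [mem_image, mem_Icc, Prod.mk.injEq]
    constructor
    · rintro ⟨_, ⟨h1, h2⟩, rfl, rfl⟩
      exact ⟨h1, h2, hf _ h1 h2⟩
    · rintro ⟨h1, h2, rfl⟩
      exact ⟨x, ⟨h1, h2⟩, rfl, hf x h1 h2⟩

lemma CoverInclusive.layer_unique (hT : T.CoverInclusive) {t : Finset (ℤ × ℤ)} (ht : t ∈ T.tiles)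
    {x y z : ℤ} {k : ℕ} (h1 : (x, T.lower.ht x + 2 * (k : ℤ)) ∈ t) (h2 : (y, z) ∈ t) :
    z = T.lower.ht y + 2 * k := by
  obtain ⟨a, b, l, -, -, -, hmem⟩ := hT.exists_interval ht
  have := ((hmem _ _).1 h1).2.2
  have := ((hmem _ _).1 h2).2.2
  omega

variable (T) in
/-- Some tile covers the cells in layer `k` on both sides of the step from `x` to `x + 1`. -/
def Linked (x : ℤ) (k : ℕ) : Prop :=
  ∃ t ∈ T.tiles, (x, T.lower.ht x + 2 * (k : ℤ)) ∈ t ∧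
    (x + 1, T.lower.ht (x + 1) + 2 * (k : ℤ)) ∈ t

lemma Linked.lt_depth {x : ℤ} {k : ℕ} (H : T.Linked x k) :
    k < T.depth x ∧ k < T.depth (x + 1) := by
  obtain ⟨t, ht, h1, h2⟩ := H
  obtain ⟨j, hj, hj'⟩ := lt_depth_of_mem ht h1
  obtain ⟨l, hl, hl'⟩ := lt_depth_of_mem ht h2
  exact ⟨by omega, by omega⟩

lemma CoverInclusive.linked_of_succ (hT : T.CoverInclusive) {x : ℤ} {k : ℕ}
    (H : T.Linked x (k + 1)) : T.Linked x k := by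
  have hd := H.lt_depth
  obtain ⟨t, ht, h1, h2⟩ := H
  obtain ⟨u, hu, hxu⟩ := exists_mem_of_lt_depth (T := T) (x := x) (k := k) (by omega)
  obtain ⟨w, hw⟩ := hT t ht u hu ⟨_, h1, _, hxu, rfl, by push_cast; omega⟩ _ h2
  obtain rfl := hT.layer_unique hu hxu hw
  exact ⟨u, hu, hxu, hw⟩

variable (T) in
/-- The number of tiles crossing the step from `x` to `x + 1`. -/
def links (x : ℤ) : ℕ := sInf {k | ¬ T.Linked x k}

lemma CoverInclusive.lt_links_iff (hT : T.CoverInclusive) {x : ℤ} {k : ℕ} :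
    k < T.links x ↔ T.Linked x k := by
  constructor
  · intro h
    simpa using Nat.notMem_of_lt_sInf h
  · intro h
    by_contra hle
    have hnot : ¬ T.Linked x (T.links x) :=
      Nat.sInf_mem (s := {k | ¬ T.Linked x k}) ⟨T.depth x, fun H => lt_irrefl _ H.lt_depth.1⟩
    obtain ⟨j, hj⟩ := Nat.exists_eq_add_of_le (not_lt.1 hle)
    have : ∀ j, T.Linked x (T.links x + j) → T.Linked x (T.links x) := by
      intro j
      induction j with
      | zero => exact id
      | succ j ih => exact fun H => ih (hT.linked_of_succ H)
    exact hnot (this j (hj ▸ h))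

lemma CoverInclusive.bounded (hT : T.CoverInclusive) : Bounded n T.depth T.links where
  left x k hk := by
    have := range_of_lt_depth (hT.lt_links_iff.1 hk).lt_depth.1
    omega
  right x k hk := (range_of_lt_depth (hT.lt_links_iff.1 hk).lt_depth.1).2
  le x := by
    by_contra! h
    exact lt_irrefl _ (hT.lt_links_iff.1 h).lt_depth.1
  le_succ x := by
    by_contra! h
    exact lt_irrefl _ (hT.lt_links_iff.1 h).lt_depth.2

lemma CoverInclusive.eq_runTile (hT : T.CoverInclusive) {t : Finset (ℤ × ℤ)} (ht : t ∈ T.tiles)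
    {x : ℤ} {k : ℕ} (hx : (x, T.lower.ht x + 2 * (k : ℤ)) ∈ t) :
    t = runTile n T.lower.ht T.links x k := by
  ext ⟨y, z⟩
  rw [mem_runTile]
  constructor
  · intro hy
    obtain ⟨l, hl, hl'⟩ := lt_depth_of_mem ht hy
    have r := range_of_lt_depth hl
    refine ⟨r.1.le, r.2.le, fun m h1 h2 => hT.lt_links_iff.2 ⟨t, ht, ?_⟩,
      hT.layer_unique ht hx hy⟩
    obtain ⟨a, b, j, -, -, -, hmem⟩ := hT.exists_interval ht
    have h3 := (hmem _ _).1 hx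
    have h4 := (hmem _ _).1 hy
    exact ⟨(hmem _ _).2 (by omega), (hmem _ _).2 (by omega)⟩
  · rintro ⟨-, -, hr, rfl⟩
    rcases le_total x y with hxy | hxy
    · induction y, hxy using Int.leInduction with
      | base => exact hx
      | succ y hxy ih =>
        obtain ⟨u, hu, h1, h2⟩ := hT.lt_links_iff.1 (hr y (by omega) (by omega))
        rwa [eq_of_mem ht hu (ih fun m h3 h4 => hr m (by omega) (by omega)) h1]
    · induction y, hxy using Int.leInductionDown with
      | base => exact hx
      | pred y hxy ih =>
        obtain ⟨u, hu, h1, h2⟩ := hT.lt_links_iff.1 (hr (y - 1) (by omega) (by omega))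
        rw [sub_add_cancel] at h2
        rwa [eq_of_mem ht hu (ih fun m h3 h4 => hr m (by omega) (by omega)) h2]

lemma CoverInclusive.tiles_eq (hT : T.CoverInclusive) :
    T.tiles = runTiles n T.lower.ht T.depth T.links := by
  ext t
  rw [mem_runTiles]
  constructor
  · intro ht
    obtain ⟨a, b, k, hab, -, -, hmem⟩ := hT.exists_interval ht
    have ha := (hmem a _).2 ⟨le_rfl, hab, rfl⟩
    obtain ⟨l, hl, hl'⟩ := lt_depth_of_mem ht ha
    have r := range_of_lt_depth hl
    exact ⟨a, k, r.1.le, r.2.le, by omega, (hT.eq_runTile ht ha).symm⟩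
  · rintro ⟨x, k, -, -, hk, rfl⟩
    obtain ⟨t, ht, hx⟩ := exists_mem_of_lt_depth hk
    rwa [← hT.eq_runTile ht hx]

lemma CoverInclusive.ext {T' : DyckTiling n} (hT : T.CoverInclusive) (hT' : T'.CoverInclusive)
    (hl : T.lower = T'.lower) (hd : T.depth = T'.depth) (he : T.links = T'.links) : T = T' := by
  have hu : T.upper = T'.upper := DyckPath.ext_ht fun x _ _ => by
    rw [T.upper_ht, T'.upper_ht, hl, hd]
  have ht : T.tiles = T'.tiles := by rw [hT.tiles_eq, hT'.tiles_eq, hl, hd, he]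
  cases T
  cases T'
  simp_all

lemma CoverInclusive.area_add_numTiles (hT : T.CoverInclusive) :
    T.area + T.numTiles + ∑ x ∈ Icc (-(n : ℤ)) n, T.links x =
      2 * ∑ x ∈ Icc (-(n : ℤ)) n, T.depth x := by
  rw [area, card_skewCells T.below, numTiles, hT.tiles_eq, hT.bounded.card_runTiles, add_assoc,
    ← sum_add_distrib, two_mul]
  congr 1
  exact sum_congr rfl fun x _ => Nat.sub_add_cancel (hT.bounded.le x)

lemma CoverInclusive.admissible (hT : T.CoverInclusive) {f : ChordForest}
    (hf : ChordForest.Follows T.lower.ht f (-n)) (hn : f.size = n) :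
    ChordForest.Admissible (f.chords (-n)) T.depth T.links := by
  intro p q hpq
  obtain ⟨hup, hdown, hend, hlt⟩ := hf.chord hpq
  obtain ⟨h1, h2, h3⟩ := ChordForest.chords_range hpq
  rw [hn] at h3
  have span : ∀ k, T.Linked p k ∨ T.Linked q k → ∀ m, p ≤ m → m ≤ q → T.Linked m k := by
    intro k H m hm1 hm2
    obtain ⟨t, ht, H⟩ : ∃ t ∈ T.tiles,
        ((p, T.lower.ht p + 2 * (k : ℤ)) ∈ t ∧ (p + 1, T.lower.ht (p + 1) + 2 * (k : ℤ)) ∈ t) ∨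
        ((q, T.lower.ht q + 2 * (k : ℤ)) ∈ t ∧ (q + 1, T.lower.ht (q + 1) + 2 * (k : ℤ)) ∈ t) := by
      rcases H with ⟨t, ht, H⟩ | ⟨t, ht, H⟩
      · exact ⟨t, ht, Or.inl H⟩
      · exact ⟨t, ht, Or.inr H⟩
    obtain ⟨a, b, l, hab, heq, hmin, hmem⟩ := hT.exists_interval ht
    simp only [hmem] at H
    have hspan : a ≤ p ∧ q + 1 ≤ b := by
      rcases H with H | H
      · refine ⟨H.1.1, ?_⟩
        by_contra hb
        have := hlt b (by omega) (by omega)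
        have := hmin p (by omega) (by omega)
        omega
      · refine ⟨?_, H.2.2.1⟩
        by_contra ha
        have := hlt a (by omega) (by omega)
        have := hmin (q + 1) (by omega) (by omega)
        omega
    exact ⟨t, ht, (hmem _ _).2 (by omega), (hmem _ _).2 (by omega)⟩
  have le_of : ∀ {a b : ℕ}, (∀ k, k < a → k < b) → a ≤ b := fun {a b} H => by
    by_contra! hab
    exact lt_irrefl _ (H b hab)
  have hu1 := T.upper.ht_succ (x := p) (by omega) (by omega)
  have hu2 := T.upper.ht_succ (x := q) (by omega) (by omega)
  rw [T.upper_ht, T.upper_ht] at hu1 hu2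
  refine ⟨by omega, by omega, le_antisymm (le_of fun k hk => ?_) (le_of fun k hk => ?_),
    fun m hm1 hm2 => le_of fun k hk => ?_, fun m hm1 hm2 => le_of fun k hk => ?_⟩
  all_goals rw [hT.lt_links_iff] at hk
  · exact hT.lt_links_iff.2 (span k (Or.inr hk) p le_rfl h2.le)
  · exact hT.lt_links_iff.2 (span k (Or.inl hk) q h2.le le_rfl)
  · exact hT.lt_links_iff.2 (span k (Or.inl hk) m hm1 hm2)
  · exact (span k (Or.inl hk) m hm1.le hm2).lt_depth.1

end DyckTiling

/-! ### The tiling described by admissible labels -/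

section Construction

variable {n : ℕ} {h : ℤ → ℤ} {d e : ℤ → ℕ} {f : ChordForest}

lemma ChordForest.Admissible.bounded (H : Admissible (f.chords (-n)) d e) (hn : f.size = n)
    (he : ∀ x, x < -(n : ℤ) ∨ (n : ℤ) ≤ x → e x = 0) : Bounded n d e := by
  have hle : ∀ x, e x ≤ d x ∧ e x ≤ d (x + 1) := by
    intro x
    by_cases hx : -(n : ℤ) ≤ x ∧ x < n
    · obtain ⟨p, q, hpq, rfl | rfl⟩ := exists_chord (f := f) hx.1 (by omega)
      all_goals
        obtain ⟨h1, h2, h3, -, h4⟩ := H _ _ hpq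
        have hlt := (chords_range hpq).2.1
      · have := h4 (x + 1) (by omega) (by omega)
        omega
      · have := h4 x hlt le_rfl
        omega
    · rw [he x (by omega)]
      omega
  refine ⟨fun x k hk => ?_, fun x k hk => ?_, fun x => (hle x).1, fun x => (hle x).2⟩
  · by_contra hx
    rw [he x (by omega)] at hk
    omega
  · by_contra hx
    rw [he x (by omega)] at hk
    omega

lemma isDyckTile_runTile (hf : ChordForest.Follows h f (-n)) (hn : f.size = n)
    (H : ChordForest.Admissible (f.chords (-n)) d e) (B : Bounded n d e) {x : ℤ} {k : ℕ}
    (h1 : -(n : ℤ) ≤ x) (h2 : x ≤ n) : IsDyckTile (runTile n h e x k) := by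
  obtain ⟨a, b, hax, hxb, han, hbn, hea, heb, hin, hrun⟩ := B.exists_interval (k := k) h1 h2
  have chord : ∀ m, a ≤ m → m < b → ∃ p q, a ≤ p ∧ p < q ∧ q < b ∧ (m = p ∨ m = q) ∧
      h (p + 1) = h p + 1 ∧ h (q + 1) = h q - 1 ∧ h (q + 1) = h p := by
    intro m hm1 hm2
    obtain ⟨p, q, hpq, hm⟩ := ChordForest.exists_chord (f := f) (o := -n) (m := m) (by omega)
      (by omega)
    obtain ⟨-, -, heq, hmin, -⟩ := H p q hpq
    obtain ⟨hup, hdown, hend, -⟩ := hf.chord hpq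
    have hlt := (ChordForest.chords_range hpq).2.1
    have hk : k < e p := by
      have := hin m hm1 hm2
      rcases hm with rfl | rfl <;> omega
    refine ⟨p, q, ?_, hlt, ?_, hm, hup, hdown, hend⟩
    · by_contra hp
      exact hea (hk.trans_le (hmin (a - 1) (by omega) (by omega)))
    · by_contra hq
      exact heb (hk.trans_le (hmin b (by omega) (by omega)))
  have hleft : ∀ j : ℕ, a + j ≤ b → h a ≤ h (a + j) := by
    intro j
    induction j using Nat.strong_induction_on with
    | _ j ih =>
      intro hj
      rcases Nat.eq_zero_or_pos j with rfl | hpos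
      · simp
      obtain ⟨p, q, hp, hpq, hq, hm, hup, hdown, hend⟩ := chord (a + j - 1) (by omega) (by omega)
      rcases hm with hm | hm
      · have := ih (j - 1) (by omega) (by omega)
        rw [show a + ((j - 1 : ℕ) : ℤ) = p by omega] at this
        rw [show a + (j : ℤ) = p + 1 by omega]
        omega
      · have := ih (p - a).toNat (by omega) (by omega)
        rw [show a + ((p - a).toNat : ℤ) = p by omega] at this
        rw [show a + (j : ℤ) = q + 1 by omega]
        omega
  have hright : ∀ j : ℕ, a ≤ b - j → h b ≤ h (b - j) := by
    intro j
    induction j using Nat.strong_induction_on with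
    | _ j ih =>
      intro hj
      rcases Nat.eq_zero_or_pos j with rfl | hpos
      · simp
      obtain ⟨p, q, hp, hpq, hq, hm, hup, hdown, hend⟩ := chord (b - j) (by omega) (by omega)
      rcases hm with hm | hm
      · have := ih (b - q - 1).toNat (by omega) (by omega)
        rw [show b - ((b - q - 1).toNat : ℤ) = q + 1 by omega] at this
        rw [hm]
        omega
      · have := ih (j - 1) (by omega) (by omega)
        rw [show b - ((j - 1 : ℕ) : ℤ) = q + 1 by omega] at this
        rw [hm]
        omega
  have hleft' : ∀ y, a ≤ y → y ≤ b → h a ≤ h y := fun y hy1 hy2 => by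
    have := hleft (y - a).toNat (by omega)
    rwa [show a + ((y - a).toNat : ℤ) = y by omega] at this
  have hright' : h b ≤ h a := by
    have := hright (b - a).toNat (by omega)
    rwa [show b - ((b - a).toNat : ℤ) = a by omega] at this
  have hab := hleft' b (by omega) le_rfl
  refine ⟨a, b, fun y => h y + 2 * k, by omega, fun y hy1 hy2 => ?_, by dsimp only; omega,
    fun y hy1 hy2 => by have := hleft' y hy1 hy2; dsimp only; omega, ?_⟩
  · obtain ⟨p, q, -, -, -, rfl | rfl, hup, hdown, -⟩ := chord y hy1 hy2 <;> dsimp only <;> omega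
  · ext ⟨y, z⟩
    rw [mem_runTile]
    have := hrun y
    simp only [mem_image, mem_Icc, Prod.mk.injEq]
    constructor
    · rintro ⟨hy1, hy2, hy3, rfl⟩
      exact ⟨y, this.1 ⟨hy1, hy2, hy3⟩, rfl, rfl⟩
    · rintro ⟨_, hy, rfl, rfl⟩
      obtain ⟨hy1, hy2, hy3⟩ := this.2 hy
      exact ⟨hy1, hy2, hy3, rfl⟩

lemma exists_tiling {lam : DyckPath n} (hf : ChordForest.Follows lam.ht f (-n)) (hn : f.size = n)
    (H : ChordForest.Admissible (f.chords (-n)) d e)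
    (hd : ∀ x, x ≤ -(n : ℤ) ∨ (n : ℤ) ≤ x → d x = 0)
    (he : ∀ x, x < -(n : ℤ) ∨ (n : ℤ) ≤ x → e x = 0) :
    ∃ T : DyckTiling n, T.CoverInclusive ∧ T.lower = lam ∧ T.depth = d ∧ T.links = e := by
  have B := H.bounded hn he
  obtain ⟨mu, hmu⟩ := DyckPath.exists_ht_eq (n := n) (fun x => lam.ht x + 2 * d x)
    (by simp [hd (-n) (by omega), lam.ht_of_le]) (by simp [hd n (by omega), lam.ht_of_ge])
    (fun x _ _ => by have := lam.ht_nonneg x; omega) (fun x h1 h2 => by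
      obtain ⟨p, q, hpq, rfl | rfl⟩ := ChordForest.exists_chord (f := f) h1 (by omega)
      all_goals
        obtain ⟨h3, h4, -⟩ := H _ _ hpq
        obtain ⟨h5, h6, -⟩ := hf.chord hpq
        omega)
  have hmu' : ∀ x, mu.ht x = lam.ht x + 2 * d x := by
    intro x
    by_cases hx : -(n : ℤ) ≤ x ∧ x ≤ n
    · exact hmu x hx.1 hx.2
    rw [hd x (by omega)]
    rcases not_and_or.1 hx with h1 | h1
    · simp [DyckPath.ht_of_le _ (not_le.1 h1).le]
    · simp [DyckPath.ht_of_ge _ (not_le.1 h1).le]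
  have hle : ∀ x, lam.ht x ≤ mu.ht x := fun x => by rw [hmu' x]; omega
  have hgap : pathGap lam mu = d := by
    funext x
    rw [pathGap, hmu' x]
    omega
  have hrange : ∀ x k, k < d x → -(n : ℤ) ≤ x ∧ x ≤ n := fun x k hk => by
    by_contra hx
    rw [hd x (by omega)] at hk
    omega
  let T : DyckTiling n :=
    { lower := lam
      upper := mu
      below := hle
      tiles := runTiles n lam.ht d e
      isDyck := fun t ht => by
        obtain ⟨x, k, h1, h2, -, rfl⟩ := mem_runTiles.1 ht
        exact isDyckTile_runTile hf hn H B h1 h2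
      disj := fun t ht u hu hne => by
        obtain ⟨x, k, -, -, -, rfl⟩ := mem_runTiles.1 ht
        obtain ⟨y, l, -, -, -, rfl⟩ := mem_runTiles.1 hu
        rw [disjoint_left]
        rintro ⟨z, w⟩ h1 h2
        obtain ⟨-, -, hr1, hw1⟩ := mem_runTile.1 h1
        obtain ⟨-, -, hr2, hw2⟩ := mem_runTile.1 h2
        obtain rfl : k = l := by omega
        exact hne (runTile_eq_of_run (hr1.trans hr2.symm))
      cover := by
        ext ⟨x, z⟩
        rw [mem_skewCells hle, hgap, mem_biUnion]
        constructor
        · rintro ⟨t, ht, hxt⟩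
          obtain ⟨y, k, -, -, hk, rfl⟩ := mem_runTiles.1 ht
          obtain ⟨-, -, hr, hz⟩ := mem_runTile.1 hxt
          exact ⟨k, B.lt_of_run hk hr, hz⟩
        · rintro ⟨k, hk, rfl⟩
          obtain ⟨h1, h2⟩ := hrange x k hk
          exact ⟨_, mem_runTiles.2 ⟨x, k, h1, h2, hk, rfl⟩,
            mem_runTile.2 ⟨h1, h2, Run.refl x, rfl⟩⟩ }
  have hT : T.CoverInclusive := by
    rintro t ht u hu ⟨⟨x, z⟩, hxt, ⟨x', w⟩, hxu, hxx, hzw⟩ ⟨y, v⟩ hy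
    obtain ⟨x1, k, -, -, -, rfl⟩ := mem_runTiles.1 ht
    obtain ⟨x2, l, -, -, -, rfl⟩ := mem_runTiles.1 hu
    obtain rfl : x = x' := hxx
    obtain ⟨-, -, hr1, hz⟩ := mem_runTile.1 hxt
    obtain ⟨-, -, hr2, hw⟩ := mem_runTile.1 hxu
    obtain ⟨hy1, hy2, hr3, -⟩ := mem_runTile.1 hy
    dsimp only at hzw
    exact ⟨_, mem_runTile.2 ⟨hy1, hy2,
      hr2.trans ((hr1.symm.trans hr3).mono (by omega)), rfl⟩⟩
  refine ⟨T, hT, rfl, hgap, ?_⟩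
  have hlinked : ∀ x k, T.Linked x k ↔ k < e x := by
    intro x k
    constructor
    · rintro ⟨t, ht, h1, h2⟩
      obtain ⟨y, l, -, -, -, rfl⟩ := mem_runTiles.1 ht
      obtain ⟨-, -, hr1, hk1⟩ := mem_runTile.1 h1
      obtain ⟨-, -, hr2, -⟩ := mem_runTile.1 h2
      obtain rfl : k = l := by
        have : T.lower = lam := rfl
        rw [this] at hk1
        omega
      exact Run.succ_iff.1 (hr1.symm.trans hr2)
    · intro hk
      have hkd := hk.trans_le (B.le x)
      obtain ⟨h1, h2⟩ := hrange x k hkd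
      obtain ⟨h3, h4⟩ := hrange (x + 1) k (hk.trans_le (B.le_succ x))
      exact ⟨_, mem_runTiles.2 ⟨x, k, h1, h2, hkd, rfl⟩, mem_runTile.2 ⟨h1, h2, Run.refl x, rfl⟩,
        mem_runTile.2 ⟨h3, h4, Run.succ_iff.2 hk, rfl⟩⟩
  funext x
  refine le_antisymm (not_lt.1 fun hlt => ?_) (not_lt.1 fun hlt => ?_)
  · exact lt_irrefl _ ((hlinked _ _).1 (hT.lt_links_iff.1 hlt))
  · exact lt_irrefl _ (hT.lt_links_iff.2 ((hlinked _ _).2 hlt))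

end Construction

/-! ### The generating function -/

open Polynomial ChordForest in
lemma finsum_art_eq_transfer {n : ℕ} {lam : DyckPath n} {f : ChordForest}
    (hf : Follows lam.ht f (-n)) (hn : f.size = n) :
    ∑ᶠ T : {T : DyckTiling n // T.CoverInclusive ∧ T.lower = lam}, (X : ℤ[X]) ^ T.1.art =
      transfer f (fun j => if j = 0 then 1 else 0) 0 := by
  classical
  have hex : ∀ T : {T : DyckTiling n // T.CoverInclusive ∧ T.lower = lam},
      ∃ c : Cfg f, Valid c ∧ Records T.1.depth T.1.links c (-n) 0 := by
    rintro ⟨T, hT, rfl⟩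
    exact (hT.admissible hf hn).exists_cfg (fun _ _ _ => Nat.zero_le _) (fun _ _ _ => Nat.zero_le _)
  choose F hvalid hrec using hex
  let S := (cfgs f 0).filter fun c => last c = 0
  have hF : ∀ T, F T ∈ S := by
    intro T
    have h1 := (hrec T).first_eq
    have h2 := (hrec T).last_eq
    rw [DyckTiling.depth, pathGap_of_le le_rfl] at h1
    rw [DyckTiling.depth, pathGap_of_ge (by omega)] at h2
    refine mem_filter.2 ⟨(mem_cfgs _ _ _).2 ⟨hvalid T, by omega⟩, by omega⟩
  have hart : ∀ T, T.1.art = weight (F T) := by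
    intro T
    have h1 := T.2.1.area_add_numTiles
    have h2 := (hrec T).two_mul_sum
    have hlast : T.1.links n = 0 := by
      by_contra hne
      exact lt_irrefl _ (T.2.1.bounded.right n 0 (Nat.pos_of_ne_zero hne))
    have hcol : Ico (-(n : ℤ)) (-(n : ℤ) + 2 * f.size + 1) = Icc (-(n : ℤ)) n := by
      ext x; simp only [mem_Ico, mem_Icc]; omega
    have hcol' : Icc (-(n : ℤ)) n = insert (n : ℤ) (Ico (-(n : ℤ)) (-(n : ℤ) + 2 * f.size)) := by
      ext x; simp only [mem_Ico, mem_Icc, mem_insert]; omega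
    have hsum : ∑ x ∈ Icc (-(n : ℤ)) n, T.1.links x =
        ∑ x ∈ Ico (-(n : ℤ)) (-(n : ℤ) + 2 * f.size), T.1.links x := by
      rw [hcol', sum_insert (by simp only [mem_Ico]; omega), hlast, zero_add]
    rw [hcol] at h2
    rw [DyckTiling.art]
    omega
  have hbij : Function.Bijective fun T => (⟨F T, hF T⟩ : {c // c ∈ S}) := by
    constructor
    · intro T T' heq
      have hFF : F T = F T' := congrArg Subtype.val heq
      obtain ⟨hd, he⟩ := (hrec T).labels_unique (hFF ▸ hrec T')
      refine Subtype.ext (T.2.1.ext T'.2.1 (T.2.2.trans T'.2.2.symm) ?_ ?_)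
      · funext x
        by_cases hx : -(n : ℤ) ≤ x ∧ x ≤ n
        · exact hd x hx.1 (by omega)
        · rcases not_and_or.1 hx with hx | hx <;> simp only [DyckTiling.depth]
          · rw [pathGap_of_le (by omega), pathGap_of_le (by omega)]
          · rw [pathGap_of_ge (by omega), pathGap_of_ge (by omega)]
      · funext x
        by_cases hx : -(n : ℤ) ≤ x ∧ x < n
        · exact he x hx.1 (by omega)
        · have hzero : ∀ T : {T : DyckTiling n // T.CoverInclusive ∧ T.lower = lam},
              T.1.links x = 0 := by
            intro T
            by_contra hne
            have hpos := Nat.pos_of_ne_zero hne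
            exact hx ⟨T.2.1.bounded.left x 0 hpos, T.2.1.bounded.right x 0 hpos⟩
          rw [hzero, hzero]
    · rintro ⟨c, hc⟩
      obtain ⟨hc, hlast⟩ := mem_filter.1 hc
      obtain ⟨hv, hfirst⟩ := (mem_cfgs _ _ _).1 hc
      obtain ⟨d, e, hde⟩ := exists_records c (-n) 0
      have hde' : Records (fun x => if -(n : ℤ) ≤ x ∧ x ≤ n then d x else 0)
          (fun x => if -(n : ℤ) ≤ x ∧ x < n then e x else 0) c (-n) 0 :=
        hde.congr (fun x h1 h2 => if_pos ⟨h1, by omega⟩) (fun x h1 h2 => if_pos ⟨h1, by omega⟩)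
      have h1 := hde.first_eq
      have h2 := hde.last_eq
      rw [show -(n : ℤ) + 2 * f.size = n by omega] at h2
      have hzero : ∀ x, x ≤ -(n : ℤ) ∨ (n : ℤ) ≤ x →
          (if -(n : ℤ) ≤ x ∧ x ≤ n then d x else 0) = 0 := by
        intro x hx
        split_ifs with hin
        · rcases hx with hx | hx
          · obtain rfl : x = -(n : ℤ) := by omega
            omega
          · obtain rfl : x = n := by omega
            omega
        · rfl
      obtain ⟨T, hT, hl, hTd, hTe⟩ := exists_tiling hf hn (hde'.admissible hv).1 hzero
        (fun x hx => if_neg (by omega))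
      refine ⟨⟨T, hT, hl⟩, Subtype.ext ?_⟩
      have := hrec ⟨T, hT, hl⟩
      simp only [hTd, hTe] at this
      exact this.cfg_unique hde'
  rw [finsum_eq_of_bijective (g := fun c : {c // c ∈ S} => (X : ℤ[X]) ^ weight c.1) _ hbij
    fun T => by rw [hart T], finsum_eq_sum_of_fintype, sum_coe_sort S fun c => (X : ℤ[X]) ^ weight c,
    transfer, sum_filter]
  exact sum_congr rfl fun c _ => by split_ifs <;> simp

/-! ### The hook product and the chord poset -/

namespace ChordLabeling

variable {n : ℕ} {P : DyckPath n} (C : ChordLabeling P)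

/-- The chord with label `i`, its steps being recorded by the columns in which they start. -/
def placed (i : Fin n) : ℤ × ℤ := ((C.l i : ℤ) - n, (C.r i : ℤ) - n)

lemma placed_injective : Function.Injective C.placed := fun i j hij => by
  simp only [placed, Prod.mk.injEq] at hij
  exact C.inj (by omega)

lemma placed_mem_chords {f : ChordForest} (hf : ChordForest.Follows P.ht f (-n))
    (hn : f.size = n) (i : Fin n) : C.placed i ∈ f.chords (-n) := by
  obtain ⟨hlr, hr, ⟨hl, hstep⟩, -, hend, hlt⟩ := C.chord i
  obtain ⟨p, q, hpq, hm⟩ := ChordForest.exists_chord (f := f) (o := -n) (m := (C.l i : ℤ) - n)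
    (by omega) (by omega)
  obtain ⟨hup, hdown, hend', hlt'⟩ := hf.chord hpq
  obtain ⟨h1, h2, h3⟩ := ChordForest.chords_range hpq
  have hs := P.ht_step ⟨C.l i, hl⟩
  rw [if_pos hstep] at hs
  dsimp only at hs
  simp only [DyckPath.pt] at hend hlt
  push_cast at hend
  rw [show (C.r i : ℤ) + 1 - n = C.r i - n + 1 by ring] at hend
  rcases hm with rfl | rfl
  · have : (C.r i : ℤ) - n = q := by
      rcases lt_trichotomy ((C.r i : ℤ) - n) q with hq | hq | hq
      · have := hlt' (C.r i - n + 1) (by omega) (by omega)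
        omega
      · exact hq
      · have := hlt (q + 1 + n).toNat (by omega) (by omega)
        rw [show (((q + 1 + n).toNat : ℕ) : ℤ) - n = q + 1 by omega] at this
        omega
    rw [placed, this]
    exact hpq
  · omega

lemma hookProd_eq {f : ChordForest} (hf : ChordForest.Follows P.ht f (-n)) (hn : f.size = n) :
    f.hookProd = ∏ i, qint ((univ.filter fun j => C.l i < C.l j ∧ C.r j < C.r i).card + 1) := by
  have himage : univ.image C.placed = (f.chords (-n)).toFinset := by
    refine eq_of_subset_of_card_le (fun c hc => ?_) ?_
    · obtain ⟨i, -, rfl⟩ := mem_image.1 hc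
      exact List.mem_toFinset.2 (C.placed_mem_chords hf hn i)
    · rw [List.toFinset_card_of_nodup (ChordForest.nodup_chords f _), ChordForest.length_chords,
        card_image_of_injective _ C.placed_injective]
      simp [hn]
  rw [ChordForest.hookProd_eq_prod_chords f (-n),
    ← List.prod_toFinset _ (ChordForest.nodup_chords f _), ← himage,
    prod_image C.placed_injective.injOn]
  refine prod_congr rfl fun i _ => ?_
  have hcount := ChordForest.countP_chords (C.placed_mem_chords hf hn i)
  rw [List.countP_eq_length_filter,
    ← List.toFinset_card_of_nodup ((ChordForest.nodup_chords f _).filter _),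
    List.toFinset_filter, ← himage, filter_image,
    card_image_of_injective _ C.placed_injective] at hcount
  have hfilter : (univ.filter fun j => decide ((C.l i : ℤ) - n < (C.placed j).1 ∧
      (C.placed j).2 < (C.r i : ℤ) - n) = true) =
      univ.filter fun j => C.l i < C.l j ∧ C.r j < C.r i := by
    ext j
    simp [placed]
  rw [hfilter] at hcount
  congr 1
  simp only [placed]
  omega

end ChordLabeling

/-- If two Dyck paths of order `n` have isomorphic chord posets, then
their cover-inclusive Dyck tilings have the same generating function by the art
statistic. -/
theorem art_generating_function_poset_invariant (n : ℕ) (lam1 lam2 : DyckPath n)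
    (h : ∃ (C1 : ChordLabeling lam1) (C2 : ChordLabeling lam2),
      ∀ i j : Fin n, (C1.l j < C1.l i ∧ C1.r i < C1.r j) ↔
        (C2.l j < C2.l i ∧ C2.r i < C2.r j)) :
    ∑ᶠ T : {T : DyckTiling n // T.CoverInclusive ∧ T.lower = lam1},
        (Polynomial.X : Polynomial ℤ) ^ T.1.art =
      ∑ᶠ T : {T : DyckTiling n // T.CoverInclusive ∧ T.lower = lam2},
        (Polynomial.X : Polynomial ℤ) ^ T.1.art := by
  obtain ⟨C1, C2, hC⟩ := h
  obtain ⟨f1, hf1, hn1⟩ := lam1.exists_forest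
  obtain ⟨f2, hf2, hn2⟩ := lam2.exists_forest
  have hhook : f1.hookProd = f2.hookProd := by
    rw [C1.hookProd_eq hf1 hn1, C2.hookProd_eq hf2 hn2]
    simp only [hC]
  rw [finsum_art_eq_transfer hf1 hn1, finsum_art_eq_transfer hf2 hn2]
  refine mul_left_cancel₀ f1.hookProd_ne_zero ?_
  rw [ChordForest.hookProd_mul_transfer, hhook, ChordForest.hookProd_mul_transfer, hn1, hn2]

end
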